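/- arXiv:2208.09050 — 12 statements merged into one kernel-verified Lean document; each statement's English description precedes it below -/
import Mathlib

section
/- Let G be a finite group and X ⊆ G a totally symmetric set of cardinality k > 3. Then |G| ≥ (k+1)!. -/
/-!
Let `N` and `C` be the normalizer and the centralizer of `X`. Conjugation realizes every
permutation of `X`, so `k! * |C| ≤ |N|`. Since conjugation acts doubly transitively on `X`, either
all elements of `X` commute or no two distinct ones do. In the first case `C` contains the `k + 1`
elements of `X ∪ {1}`, hence `(k + 1)! ≤ |N|`. In the second case `x⁻¹ * y * x ∉ X` for distinct
`x y ∈ X`, so `x ∉ N`; nor is `x⁻¹ * y` in `N`, as it conjugates `y` to `x⁻¹ * y * x`. Hence the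
elements of `X ∪ {1}` lie in distinct cosets of `N`, and `(k + 1)! ≤ [G : N] * |N| = |G|`.
-/

/-- A subset `X` of a group `G` is *totally symmetric* if every permutation of `X`
can be realized by conjugation by an element of `G`. -/
def IsTotallySymmetric {G : Type*} [Group G] (X : Set G) : Prop :=
  ∀ π : X ≃ X, ∃ g : G, ∀ x : X, g * (x : G) * g⁻¹ = ((π x : X) : G)

open scoped Cardinal

namespace IsTotallySymmetric

variable {G : Type*} [Group G] {X : Set G}

lemma exists_conj_eq_and_commute (hX : IsTotallySymmetric X) {a b : G} (ha : a ∈ X) (hb : b ∈ X) :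
    ∃ g : G, g * a * g⁻¹ = b ∧ ∀ x ∈ X, x ≠ a → x ≠ b → Commute g x := by
  classical
  obtain ⟨g, hg⟩ := hX (Equiv.swap ⟨a, ha⟩ ⟨b, hb⟩)
  refine ⟨g, by simpa using hg ⟨a, ha⟩, fun x hx hxa hxb => mul_inv_eq_iff_eq_mul.mp ?_⟩
  rw [hg ⟨x, hx⟩, Equiv.swap_apply_of_ne_of_ne] <;> simpa

lemma exists_conj_eq_and_conj_eq (hX : IsTotallySymmetric X) {x y a b : G} (hx : x ∈ X)
    (hy : y ∈ X) (hxy : x ≠ y) (ha : a ∈ X) (hb : b ∈ X) (hab : a ≠ b) :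
    ∃ g : G, g * x * g⁻¹ = a ∧ g * y * g⁻¹ = b := by
  have hxy' : (⟨x, hx⟩ : X) ≠ ⟨y, hy⟩ := by simpa
  have hab' : (⟨a, ha⟩ : X) ≠ ⟨b, hb⟩ := by simpa
  obtain ⟨π, hπx, hπy⟩ := MulAction.is_two_pretransitive_iff.mp
    (Equiv.Perm.isMultiplyPretransitive X 2) hxy' hab'
  obtain ⟨g, hg⟩ := hX π
  exact ⟨g, (hg _).trans (congrArg _ hπx), (hg _).trans (congrArg _ hπy)⟩

lemma one_notMem (hX : IsTotallySymmetric X) (hnt : X.Nontrivial) : (1 : G) ∉ X := by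
  intro h1
  obtain ⟨y, hy, hy1⟩ := hnt.exists_ne 1
  obtain ⟨g, hg, -⟩ := hX.exists_conj_eq_and_commute h1 hy
  exact hy1 (by simpa using hg.symm)

lemma subset_centralizer_of_commute (hX : IsTotallySymmetric X) {x y : G} (hx : x ∈ X)
    (hy : y ∈ X) (hxy : x ≠ y) (hcomm : Commute x y) : X ⊆ Subgroup.centralizer X := by
  intro b hb a ha
  obtain rfl | hab := eq_or_ne a b
  · rfl
  obtain ⟨g, rfl, rfl⟩ := hX.exists_conj_eq_and_conj_eq hx hy hxy ha hb hab
  exact (Commute.conj_iff g).mpr hcomm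

/-- If `z = x⁻¹ * y * x` were a third element of `X`, it could be moved to a fourth one by
conjugation by some `g` commuting with `x` and `y`; but such a `g` also commutes with `z`. -/
lemma commute_of_inv_mul_mul_mem (hX : IsTotallySymmetric X) (h3 : X.encard ≠ 3) {x y : G}
    (hx : x ∈ X) (hy : y ∈ X) (hz : x⁻¹ * y * x ∈ X) : Commute x y := by
  by_contra hcomm
  have hxy : x ≠ y := fun h => hcomm (h ▸ Commute.refl x)
  have hxz : x ≠ x⁻¹ * y * x := fun h => hxy (by simpa [inv_mul_eq_one] using h)
  have hyz : y ≠ x⁻¹ * y * x := fun h => hcomm (by rwa [mul_assoc, eq_inv_mul_iff_mul_eq] at h)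
  obtain ⟨w, hw, hwx, hwy, hwz⟩ : ∃ w ∈ X, w ≠ x ∧ w ≠ y ∧ w ≠ x⁻¹ * y * x := by
    by_contra! hX_sub
    refine h3 (Set.encard_eq_three.mpr ⟨x, y, x⁻¹ * y * x, hxy, hxz, hyz, ?_⟩)
    ext w
    grind
  obtain ⟨g, hgz, hg⟩ := hX.exists_conj_eq_and_commute hz hw
  have hgx : Commute g x := hg x hx hxz hwx.symm
  have hgy : Commute g y := hg y hy hyz hwy.symm
  exact hwz (hgz.symm.trans ((hgx.inv_right.mul_right hgy).mul_right hgx).mul_inv_cancel)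

lemma inv_mul_mul_notMem (hX : IsTotallySymmetric X) (h3 : X.encard ≠ 3)
    (hcomm : ¬ X ⊆ Subgroup.centralizer X) {x y : G} (hx : x ∈ X) (hy : y ∈ X) (hxy : x ≠ y) :
    x⁻¹ * y * x ∉ X := fun hz =>
  hcomm (hX.subset_centralizer_of_commute hx hy hxy (hX.commute_of_inv_mul_mul_mem h3 hx hy hz))

lemma mk_perm_mul_mk_centralizer_le (hX : IsTotallySymmetric X) :
    #(Equiv.Perm X) * #(Subgroup.centralizer X) ≤ #(Subgroup.normalizer X) := by
  choose f hf using hX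
  have hf_mem (π : Equiv.Perm X) : f π ∈ Subgroup.normalizer X := by
    rw [Subgroup.mem_normalizer_iff_conj_image_eq]
    calc MulAut.conj (f π) '' X = Set.range (Subtype.val ∘ π) := by
          rw [Set.image_eq_range]
          exact congrArg Set.range (funext (hf π))
      _ = X := by rw [π.surjective.range_comp, Subtype.range_coe]
  have hconj (π : Equiv.Perm X) (c : Subgroup.centralizer X) (x : X) :
      f π * c * x * (f π * c)⁻¹ = π x := by
    have hcx : (c : G) * x * (c : G)⁻¹ = x := mul_inv_eq_iff_eq_mul.mpr (c.2 x x.2).symm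
    rw [← hf, mul_inv_rev]
    nth_rewrite 2 [← hcx]
    simp only [mul_assoc]
  refine Cardinal.mk_le_of_injective (α := Equiv.Perm X × Subgroup.centralizer X)
    (f := fun p => ⟨f p.1 * p.2,
      mul_mem (hf_mem p.1) (Subgroup.centralizer_le_normalizer X p.2.2)⟩) ?_
  rintro ⟨π, c⟩ ⟨π', c'⟩ h
  have hmul : f π * c = f π' * c' := congrArg Subtype.val h
  obtain rfl : π = π' := by
    ext x
    rw [← hconj π c, ← hconj π' c', hmul]
  exact Prod.ext rfl (Subtype.ext (mul_left_cancel hmul))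

lemma injOn_quotientMk_normalizer (hX : IsTotallySymmetric X) (hnt : X.Nontrivial)
    (h3 : X.encard ≠ 3) (hcomm : ¬ X ⊆ Subgroup.centralizer X) :
    Set.InjOn (QuotientGroup.mk : G → G ⧸ Subgroup.normalizer X) (insert 1 X) := by
  rw [Set.injOn_insert (hX.one_notMem hnt)]
  constructor
  · intro x hx y hy hmk
    by_contra hxy
    have hmem := (Subgroup.mem_set_normalizer_iff.mp (QuotientGroup.eq.mp hmk) y).mp hy
    exact hX.inv_mul_mul_notMem h3 hcomm hx hy hxy (by simpa [mul_assoc] using hmem)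
  · rintro ⟨x, hx, hmk⟩
    obtain ⟨y, hy, hyx⟩ := hnt.exists_ne x
    have hmem := (Subgroup.mem_set_normalizer_iff.mp (QuotientGroup.eq.mp hmk) y).mp hy
    exact hX.inv_mul_mul_notMem h3 hcomm hx hy hyx.symm (by simpa using hmem)

lemma mk_add_one_le_mk_centralizer (hX : IsTotallySymmetric X) (hnt : X.Nontrivial)
    (hcomm : X ⊆ Subgroup.centralizer X) : #X + 1 ≤ #(Subgroup.centralizer X) := by
  rw [← Cardinal.mk_insert (hX.one_notMem hnt)]
  exact Cardinal.mk_le_mk_of_subset (Set.insert_subset (one_mem _) hcomm)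

lemma mk_add_one_le_mk_quotient_normalizer (hX : IsTotallySymmetric X) (hnt : X.Nontrivial)
    (h3 : X.encard ≠ 3) (hcomm : ¬ X ⊆ Subgroup.centralizer X) :
    #X + 1 ≤ #(G ⧸ Subgroup.normalizer X) := by
  rw [← Cardinal.mk_insert (hX.one_notMem hnt),
    ← Cardinal.mk_image_eq_of_injOn _ _ (hX.injOn_quotientMk_normalizer hnt h3 hcomm)]
  exact Cardinal.mk_set_le _

end IsTotallySymmetric

theorem totally_symmetric_card_lower_bound_general {G : Type*} [Group G] {X : Set G}
    (hX : IsTotallySymmetric X) (hnt : X.Nontrivial) (h3 : X.encard ≠ 3) :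
    (#X + 1) * #(Equiv.Perm X) ≤ #G := by
  have hN := hX.mk_perm_mul_mk_centralizer_le
  by_cases hcomm : X ⊆ Subgroup.centralizer X
  · calc (#X + 1) * #(Equiv.Perm X)
        ≤ #(Subgroup.centralizer X) * #(Equiv.Perm X) := by
          gcongr
          exact hX.mk_add_one_le_mk_centralizer hnt hcomm
      _ ≤ #(Subgroup.normalizer X) := by rwa [mul_comm]
      _ ≤ #G := Cardinal.mk_set_le _
  · have hperm : #(Equiv.Perm X) ≤ #(Subgroup.normalizer X) :=
      (Cardinal.le_mul_right (Cardinal.mk_ne_zero _)).trans hN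
    calc (#X + 1) * #(Equiv.Perm X)
        ≤ #(G ⧸ Subgroup.normalizer X) * #(Subgroup.normalizer X) := by
          gcongr
          exact hX.mk_add_one_le_mk_quotient_normalizer hnt h3 hcomm
      _ = #G := Subgroup.groupEquivQuotientProdSubgroup.cardinal_eq.symm

theorem totally_symmetric_card_lower_bound {G : Type*} [Group G] [Finite G]
    (X : Set G) (k : ℕ) (hX : IsTotallySymmetric X) (hk : X.ncard = k) (h3 : 3 < k) :
    (k + 1).factorial ≤ Nat.card G := by
  have hnt : X.Nontrivial := Set.one_lt_ncard_iff_nontrivial.mp (by lia)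
  have hne : X.encard ≠ 3 := by
    rw [← X.toFinite.cast_ncard_eq]
    norm_cast
    lia
  have hle := totally_symmetric_card_lower_bound_general hX hnt hne
  simp only [← Nat.cast_card, Nat.card_perm, Nat.card_coe_set_eq, hk] at hle
  exact_mod_cast hle
end

section
/- For every n ≥ 2, the set X_n = {(1 i) : i = 2,…,n} of transpositions is a totally symmetric set of cardinality n−1 in the symmetric group S_n. -/
/-!
Conjugation acts on transpositions by `g (a i) g⁻¹ = (g a  g i)`. The map `i ↦ (a i)` is injective,
so a permutation of the transpositions moving `a` is a permutation of the points other than `a`;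
extended by fixing `a`, the latter realizes the former by conjugation.
-/

theorem isTotallySymmetric_image {ι G : Type*} [Group G] {f : ι → G} {s : Set ι}
    (hf : Set.InjOn f s) (hconj : ∀ τ : Equiv.Perm s, ∃ g : G, ∀ i : s, g * f i * g⁻¹ = f (τ i)) :
    IsTotallySymmetric (f '' s) := by
  intro π
  let e : s ≃ f '' s := Equiv.Set.imageOfInjOn f s hf
  obtain ⟨g, hg⟩ := hconj (e.symm.permCongr π)
  refine ⟨g, e.forall_congr_right.mp fun i => ?_⟩
  calc g * f i * g⁻¹ = f (e.symm.permCongr π i) := hg i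
    _ = e (e.symm (π (e i))) := rfl
    _ = π (e i) := by rw [e.apply_symm_apply]

section Swap

variable {α : Type*} [DecidableEq α]

theorem ofSubtype_mul_swap_mul_inv {p : α → Prop} [DecidablePred p] {a : α} (ha : ¬p a)
    (τ : Equiv.Perm (Subtype p)) (i : Subtype p) :
    Equiv.Perm.ofSubtype τ * Equiv.swap a i * (Equiv.Perm.ofSubtype τ)⁻¹ =
      Equiv.swap a (τ i) := by
  rw [← Equiv.swap_apply_apply, Equiv.Perm.ofSubtype_apply_of_not_mem τ ha,
    Equiv.Perm.ofSubtype_apply_coe]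

theorem isTotallySymmetric_image_swap {a : α} {s : Set α} (ha : a ∉ s) :
    IsTotallySymmetric (Equiv.swap a '' s) := by
  classical
  exact isTotallySymmetric_image (Equiv.swap_injective_of_left a).injOn fun τ =>
    ⟨Equiv.Perm.ofSubtype τ, ofSubtype_mul_swap_mul_inv ha τ⟩

variable (a : α)

theorem encard_image_swap_compl_singleton : (Equiv.swap a '' {a}ᶜ).encard = ENat.card α - 1 := by
  rw [(Equiv.swap_injective_of_left a).encard_image, Set.compl_eq_univ_sdiff,
    Set.encard_sdiff_singleton_of_mem (Set.mem_univ a), Set.encard_univ]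

theorem setOf_swap_eq_image :
    {σ : Equiv.Perm α | ∃ i : α, i ≠ a ∧ σ = Equiv.swap a i} = Equiv.swap a '' {a}ᶜ := by
  ext σ
  simp only [Set.mem_ofPred_eq, Set.mem_image, Set.mem_compl_singleton_iff, eq_comm (a := σ)]

theorem transpositions_totally_symmetric_general :
    IsTotallySymmetric {σ : Equiv.Perm α | ∃ i : α, i ≠ a ∧ σ = Equiv.swap a i} ∧
    {σ : Equiv.Perm α | ∃ i : α, i ≠ a ∧ σ = Equiv.swap a i}.encard = ENat.card α - 1 := by
  rw [setOf_swap_eq_image]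
  have ha : a ∉ ({a}ᶜ : Set α) := Set.notMem_compl_iff.mpr rfl
  exact ⟨isTotallySymmetric_image_swap ha, encard_image_swap_compl_singleton a⟩

end Swap

theorem transpositions_totally_symmetric (n : ℕ) (hn : 2 ≤ n) :
    IsTotallySymmetric
      {σ : Equiv.Perm (Fin n) | ∃ i : Fin n, i ≠ ⟨0, by omega⟩ ∧ σ = Equiv.swap ⟨0, by omega⟩ i} ∧
    ({σ : Equiv.Perm (Fin n) | ∃ i : Fin n, i ≠ ⟨0, by omega⟩ ∧ σ = Equiv.swap ⟨0, by omega⟩ i}).ncard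
      = n - 1 := by
  refine (transpositions_totally_symmetric_general _).imp_right fun hcard => ?_
  simp [Set.ncard, hcard, ENat.toNat_sub]
end

section
/- If X is a totally symmetric subset of the symmetric group S_n of cardinality k > 3, then k ≤ n − 1. -/
namespace IsTotallySymmetric

variable {G : Type*} [Group G] {X : Set G}

theorem perm_apply_eq_self_of_mem_closure (hX : IsTotallySymmetric X) {π : Equiv.Perm X} {S : Set X}
    (hS : ∀ s ∈ S, π s = s) {z : X} (hz : (z : G) ∈ Subgroup.closure ((↑) '' S : Set G)) :
    π z = z := by
  obtain ⟨g, hg⟩ := hX π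
  have hfix : Set.EqOn (MulAut.conj g).toMonoidHom (MonoidHom.id G) ((↑) '' S) := by
    rintro _ ⟨s, hs, rfl⟩
    exact (hg s).trans (congrArg Subtype.val (hS s hs))
  exact Subtype.ext ((hg z).symm.trans (MonoidHom.eqOn_closure hfix hz))

theorem subset_insert_of_mem_closure (hX : IsTotallySymmetric X) {S : Set G} (hSX : S ⊆ X)
    {z : G} (hzX : z ∈ X) (hzS : z ∈ Subgroup.closure S) (hz : z ∉ S) : X ⊆ insert z S := by
  classical
  intro w hwX
  by_contra hw
  obtain ⟨hwz, hwS⟩ : w ≠ z ∧ w ∉ S := by simpa using hw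
  have hswap : ∀ s ∈ ((↑) ⁻¹' S : Set X), Equiv.swap ⟨z, hzX⟩ ⟨w, hwX⟩ s = s := by
    rintro s (hs : (s : G) ∈ S)
    exact Equiv.swap_apply_of_ne_of_ne (by rintro rfl; exact hz hs) (by rintro rfl; exact hwS hs)
  have hfix := hX.perm_apply_eq_self_of_mem_closure hswap (z := ⟨z, hzX⟩)
    (by rwa [Subtype.image_preimage_coe, Set.inter_eq_right.2 hSX])
  rw [Equiv.swap_apply_left] at hfix
  exact hwz (congrArg Subtype.val hfix)

theorem conj_eq_self_of_conj_mem (hX : IsTotallySymmetric X) (h3 : 3 < X.encard) {x y : G}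
    (hx : x ∈ X) (hy : y ∈ X) (hxy : x * y * x⁻¹ ∈ X) : x * y * x⁻¹ = y := by
  have hclosure : x * y * x⁻¹ ∈ Subgroup.closure {x, y} := by
    have hx' : x ∈ Subgroup.closure {x, y} := Subgroup.subset_closure (by simp)
    have hy' : y ∈ Subgroup.closure {x, y} := Subgroup.subset_closure (by simp)
    exact mul_mem (mul_mem hx' hy') (inv_mem hx')
  have hpair : x * y * x⁻¹ ∈ ({x, y} : Set G) := by
    by_contra hnotMem
    have hsub := hX.subset_insert_of_mem_closure (Set.pair_subset hx hy) hxy hclosure hnotMem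
    have hcard : ({x * y * x⁻¹, x, y} : Set G).encard ≤ 3 :=
      calc ({x * y * x⁻¹, x, y} : Set G).encard
          ≤ ({x, y} : Set G).encard + 1 := Set.encard_insert_le _ _
        _ ≤ ({y} : Set G).encard + 1 + 1 := by gcongr; exact Set.encard_insert_le _ _
        _ = 3 := by rw [Set.encard_singleton]; norm_num
    exact h3.not_ge ((Set.encard_le_encard hsub).trans hcard)
  rcases hpair with h | h
  · have hyx : y = x := by simpa [mul_inv_eq_iff_eq_mul] using h
    simp [hyx]
  · exact h

end IsTotallySymmetric

section Conjugators

variable {G : Type*} [Group G] {X : Set G} {g : Equiv.Perm X → G}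

theorem injective_of_conj_eq_perm_apply (hg : ∀ π (x : X), g π * x * (g π)⁻¹ = π x) :
    Function.Injective g := by
  intro π σ h
  ext x
  rw [← hg π x, ← hg σ x, h]

theorem not_surjective_of_conj_eq_perm_apply (hg : ∀ π (x : X), g π * x * (g π)⁻¹ = π x)
    (h3 : 3 < X.encard) : ¬ Function.Surjective g := by
  intro hsurj
  have hX : IsTotallySymmetric X := fun π ↦ ⟨g π, hg π⟩
  have hnontrivial : X.Nontrivial :=
    Set.one_lt_encard_iff_nontrivial.1 (lt_trans (by norm_num) h3)
  obtain ⟨x, hx, hx1⟩ := hnontrivial.exists_ne 1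
  obtain ⟨π, rfl⟩ := hsurj x
  obtain ⟨σ, hσ⟩ := hsurj 1
  have hπσ : π = σ := by
    ext y
    have hmem : g π * y * (g π)⁻¹ ∈ X := hg π y ▸ (π y).2
    calc (π y : G) = g π * y * (g π)⁻¹ := (hg π y).symm
      _ = y := hX.conj_eq_self_of_conj_mem h3 hx y.2 hmem
      _ = g σ * y * (g σ)⁻¹ := by simp [hσ]
      _ = σ y := hg σ y
  exact hx1 (hπσ ▸ hσ)

end Conjugators

theorem totally_symmetric_card_le_general {G : Type*} [Group G] [Finite G] {X : Set G}
    (hX : IsTotallySymmetric X) (h3 : 3 < X.ncard) : X.ncard.factorial < Nat.card G := by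
  choose g hg using hX
  have hinj := injective_of_conj_eq_perm_apply hg
  have hsurj : ¬ Function.Surjective g :=
    not_surjective_of_conj_eq_perm_apply hg <|
      lt_of_lt_of_le (by exact_mod_cast h3) (Set.ncard_le_encard X)
  rw [← Nat.card_coe_set_eq, ← Nat.card_perm]
  exact lt_of_not_ge fun hle ↦ hsurj (hinj.bijective_of_nat_card_le hle).surjective

theorem totally_symmetric_card_le {n : ℕ} (X : Set (Equiv.Perm (Fin n))) (k : ℕ)
    (hX : IsTotallySymmetric X) (hk : X.ncard = k) (h3 : 3 < k) :
    k ≤ n - 1 := by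
  refine Nat.le_sub_one_of_lt ((Nat.factorial_lt (by lia)).1 ?_)
  simpa only [hk, Nat.card_perm, Nat.card_fin] using totally_symmetric_card_le_general hX (hk ▸ h3)
end

section
/- Let Y ⊆ S_6 be a totally symmetric set of cardinality 5. Then there exists a group automorphism φ of S_6 such that φ(X_6) = Y; equivalently, Y is conjugate to X_6 or Y is conjugate to ρ(X_6) for a non-inner automorphism ρ of S_6. -/
open Equiv Equiv.Perm MulAction Subgroup

theorem apply_eq_self_of_commute_swap {β : Type*} [DecidableEq β] {z : Perm β} {c d : β}
    (h : Commute z (swap c d)) (hdc : d ≠ c) (hdz : d ≠ z c) : z c = c := by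
  by_contra hc
  have hcd : z d = z c := by
    have := DFunLike.congr_fun h.eq c
    simpa [swap_apply_of_ne_of_ne hc hdz.symm] using this
  exact hdc (z.injective hcd)

section Group

variable {G H : Type*} [Group G] [Group H] {X : Set G}

/-- The conjugation action of the normalizer of a subset `X` of a group on `X`. -/
def normalizerToPerm (X : Set G) : normalizer X →* Perm X where
  toFun g := subtypePerm (MulAut.conj (g : G)).toEquiv fun x => (g.2 x).symm
  map_one' := by ext; simp
  map_mul' g h := Equiv.ext fun x => Subtype.ext <|
    DFunLike.congr_fun (map_mul MulAut.conj (g : G) h) (x : G)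

@[simp]
theorem coe_normalizerToPerm_apply (g : normalizer X) (x : X) :
    (normalizerToPerm X g x : G) = g * x * (g : G)⁻¹ :=
  rfl

theorem normalizerToPerm_apply_eq_self_iff {g : normalizer X} {x : X} :
    normalizerToPerm X g x = x ↔ Commute (g : G) x := by
  rw [Subtype.ext_iff, coe_normalizerToPerm_apply, mul_inv_eq_iff_eq_mul, commute_iff_eq]

theorem ker_normalizerToPerm :
    (normalizerToPerm X).ker = (centralizer X).subgroupOf (normalizer X) := by
  ext g
  simp only [MonoidHom.mem_ker, Equiv.ext_iff, Perm.one_apply, normalizerToPerm_apply_eq_self_iff,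
    mem_subgroupOf, mem_centralizer_iff, Subtype.forall]
  exact forall₂_congr fun _ _ => eq_comm

theorem map_normalizer_eq_normalizer_image (f : G ≃* H) (X : Set G) :
    (normalizer X).map f.toMonoidHom = normalizer (f '' X) := by
  ext g
  have hmem : ∀ x, f x ∈ f '' X ↔ x ∈ X := fun x => f.injective.mem_set_image
  rw [mem_map_equiv, mem_set_normalizer_iff, mem_set_normalizer_iff, f.surjective.forall]
  refine forall_congr' fun x => ?_
  rw [hmem, ← hmem (_ * _ * _)]
  simp only [map_mul, map_inv, f.apply_symm_apply]

theorem toPermHom_quotient_injective {K : Subgroup G} (hK : K.normalCore = ⊥) :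
    Function.Injective (toPermHom G (G ⧸ K)) := by
  rwa [← MonoidHom.ker_eq_bot_iff, ← normalCore_eq_ker]

namespace IsTotallySymmetric

theorem image (hX : IsTotallySymmetric X) {f : G →* H} (hf : Function.Injective f) :
    IsTotallySymmetric (f '' X) := by
  intro π
  let e : X ≃ f '' X := Equiv.Set.image f X hf
  obtain ⟨g, hg⟩ := hX (e.symm.permCongr π)
  refine ⟨f g, e.surjective.forall.2 fun x => ?_⟩
  have hx : f (g * x * g⁻¹) = π (e x) := by
    rw [hg]
    change (e (e.symm.permCongr π x) : H) = _
    simp [permCongr_apply]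
  rw [← hx, map_mul, map_mul, map_inv]
  rfl

theorem normalizerToPerm_surjective (hX : IsTotallySymmetric X) :
    Function.Surjective (normalizerToPerm X) := by
  intro π
  obtain ⟨g, hg⟩ := hX π
  have hg_mem : g ∈ normalizer X := by
    refine fun x => ⟨fun hx => hg ⟨x, hx⟩ ▸ (π _).2, fun hx => ?_⟩
    have := (hg (π.symm ⟨_, hx⟩)).trans (by rw [π.apply_symm_apply])
    exact conj_injective this ▸ (π.symm _).2
  exact ⟨⟨g, hg_mem⟩, Equiv.ext fun x => Subtype.ext (hg x)⟩

theorem card_normalizer (hX : IsTotallySymmetric X) (hfin : X.Finite) :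
    Nat.card (normalizer X) = Nat.card (centralizer X) * X.ncard.factorial := by
  have := hfin.to_subtype
  rw [← card_mul_index (normalizerToPerm X).ker, index_ker,
    MonoidHom.range_eq_top.2 hX.normalizerToPerm_surjective, card_top, Nat.card_perm,
    Nat.card_coe_set_eq, ker_normalizerToPerm,
    Nat.card_congr (subgroupOfEquivOfLe (centralizer_le_normalizer X)).toEquiv]

theorem commute_of_mem_normalizer (hX : IsTotallySymmetric X) (hcard : 4 ≤ X.ncard) {x w : G}
    (hx : x ∈ X) (hxN : x ∈ normalizer X) (hw : w ∈ X) : Commute x w := by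
  classical
  rcases eq_or_ne w x with rfl | hwx
  · exact Commute.refl w
  -- An element of the normalizer realizing a permutation of `X` that fixes `x` commutes with `x`.
  -- So conjugation by `x` commutes with all such permutations, in particular with `swap w v`.
  let xN : normalizer X := ⟨x, hxN⟩
  let x' : X := ⟨x, hx⟩
  let w' : X := ⟨w, hw⟩
  have := (Set.finite_of_ncard_pos (by omega : 0 < X.ncard)).to_subtype
  obtain ⟨v, hv⟩ := Cardinal.exists_notMem_of_length_lt [x', w', normalizerToPerm X xN w'] <| by
    rw [← Nat.cast_card, Nat.card_coe_set_eq]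
    exact_mod_cast hcard
  simp only [List.mem_cons, List.not_mem_nil, or_false, not_or] at hv
  obtain ⟨hvx, hvw, hvz⟩ := hv
  obtain ⟨g, hg⟩ := hX.normalizerToPerm_surjective (swap w' v)
  have hgx : Commute (g : G) x := (normalizerToPerm_apply_eq_self_iff (x := x')).1 <| by
    rw [hg, swap_apply_of_ne_of_ne (Subtype.coe_ne_coe.1 hwx.symm) (Ne.symm hvx)]
  have hcomm : Commute (normalizerToPerm X xN) (swap w' v) :=
    hg ▸ Commute.map (Subtype.ext hgx.symm.eq : Commute xN g) (normalizerToPerm X)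
  exact normalizerToPerm_apply_eq_self_iff.1 (apply_eq_self_of_commute_swap hcomm hvw hvz)

end IsTotallySymmetric

end Group

section Perm

variable {α : Type*} [Finite α]

variable {H : Subgroup (Perm α)} {Y : Set (Perm α)} {a : α}

theorem card_le_index_of_normalCore_eq_bot (hH : H.normalCore = ⊥) : Nat.card α ≤ H.index := by
  have hle := Nat.card_le_card_of_injective _ (toPermHom_quotient_injective hH)
  rw [Nat.card_perm, Nat.card_perm] at hle
  by_contra! hlt
  exact hle.not_gt ((Nat.factorial_lt (Nat.pos_of_ne_zero H.index_ne_zero_of_finite)).2 hlt)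

theorem exists_mulAut_map_eq_stabilizer (hH : H.normalCore = ⊥) (hindex : H.index = Nat.card α)
    (a : α) : ∃ f : MulAut (Perm α), H.map f.toMonoidHom = stabilizer (Perm α) a := by
  classical
  let act := toPermHom (Perm α) (Perm α ⧸ H)
  have hact : Function.Bijective act :=
    (toPermHom_quotient_injective hH).bijective_of_nat_card_le <| by
      rw [Nat.card_perm, Nat.card_perm, ← hindex, index]
  obtain ⟨e, he⟩ : ∃ e : Perm α ⧸ H ≃ α, e (1 : Perm α) = a := by
    obtain ⟨e⟩ : Nonempty (Perm α ⧸ H ≃ α) := Finite.card_eq.1 hindex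
    exact ⟨e.setValue (1 : Perm α) a, e.setValue_eq _ _⟩
  let f : MulAut (Perm α) := (MulEquiv.ofBijective act hact).trans e.permCongrHom
  have hf : ∀ g, f g a = a ↔ g ∈ H := by
    intro g
    have : f g a = e (g • ((1 : Perm α) : Perm α ⧸ H)) := by
      rw [← e.symm_apply_eq.2 he.symm]; rfl
    rw [this, ← he, e.apply_eq_iff_eq, ← mem_stabilizer_iff, stabilizer_quotient]
  refine ⟨f, ?_⟩
  ext g
  rw [mem_map_equiv, mem_stabilizer_iff, Perm.smul_def, ← hf, f.apply_symm_apply]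

namespace IsTotallySymmetric

theorem card_centralizer_mul_index_normalizer (hY : IsTotallySymmetric Y)
    (hcard : Y.ncard + 1 = Nat.card α) :
    Nat.card (centralizer Y) * (normalizer Y).index = Nat.card α := by
  have h := card_mul_index (normalizer Y)
  rw [hY.card_normalizer Y.toFinite, Nat.card_perm, ← hcard, Nat.factorial_succ,
    mul_right_comm] at h
  rw [← hcard]
  exact Nat.eq_of_mul_eq_mul_right Y.ncard.factorial_pos h

theorem not_alternatingGroup_le_normalizer {α : Type*} [Fintype α] [DecidableEq α]
    {Y : Set (Perm α)} (hY : IsTotallySymmetric Y) (h5 : 5 ≤ Nat.card α)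
    (hcard : Y.ncard + 1 = Nat.card α) : ¬ alternatingGroup α ≤ normalizer Y := by
  intro hA
  have : Nontrivial α := Finite.one_lt_card_iff_nontrivial.1 (by omega)
  have hcardA : 2 * Nat.card (alternatingGroup α) = (Y.ncard + 1) * Y.ncard.factorial := by
    rw [two_mul_nat_card_alternatingGroup, Nat.card_perm, ← hcard, Nat.factorial_succ]
  let f := (normalizerToPerm Y).comp (inclusion hA)
  rcases alternatingGroup.normal_subgroup_eq_bot_or_eq_top h5 (N := f.ker) with hker | hker
  · have hle := Nat.card_le_card_of_injective f ((MonoidHom.ker_eq_bot_iff f).1 hker)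
    rw [Nat.card_perm, Nat.card_coe_set_eq] at hle
    have := Y.ncard.factorial_pos
    nlinarith
  · have hAC : alternatingGroup α ≤ centralizer Y := fun g hg => by
      have hgf : (⟨g, hg⟩ : alternatingGroup α) ∈ f.ker := hker ▸ mem_top _
      have hg_ker : inclusion hA ⟨g, hg⟩ ∈ (normalizerToPerm Y).ker := hgf
      rwa [ker_normalizerToPerm] at hg_ker
    have hle : Nat.card (alternatingGroup α) ≤ Y.ncard + 1 :=
      calc _ ≤ Nat.card (centralizer Y) := card_le_of_le hAC
        _ ≤ Y.ncard + 1 := hcard ▸ Nat.le_of_dvd (by omega)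
          (Dvd.intro _ (hY.card_centralizer_mul_index_normalizer hcard))
    have := Y.ncard.self_le_factorial
    nlinarith

theorem normalCore_normalizer_eq_bot (hY : IsTotallySymmetric Y) (h5 : 5 ≤ Nat.card α)
    (hcard : Y.ncard + 1 = Nat.card α) : (normalizer Y).normalCore = ⊥ := by
  classical
  cases nonempty_fintype α
  by_contra hcore
  exact hY.not_alternatingGroup_le_normalizer h5 hcard <|
    (alternatingGroup_le_of_normal h5 ((nontrivial_iff_ne_bot _).2 hcore)).trans
      (normalCore_le _)

theorem index_normalizer (hY : IsTotallySymmetric Y) (h5 : 5 ≤ Nat.card α)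
    (hcard : Y.ncard + 1 = Nat.card α) : (normalizer Y).index = Nat.card α :=
  (Nat.le_of_dvd (by omega)
    (Dvd.intro_left _ (hY.card_centralizer_mul_index_normalizer hcard))).antisymm
    (card_le_index_of_normalCore_eq_bot (hY.normalCore_normalizer_eq_bot h5 hcard))

theorem centralizer_eq_bot (hY : IsTotallySymmetric Y) (h5 : 5 ≤ Nat.card α)
    (hcard : Y.ncard + 1 = Nat.card α) : centralizer Y = ⊥ := by
  have h := hY.card_centralizer_mul_index_normalizer hcard
  rw [hY.index_normalizer h5 hcard] at h
  exact card_eq_one.1 (Nat.eq_of_mul_eq_mul_right (by omega) (h.trans (one_mul _).symm))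

theorem exists_mem_apply_ne (hY : IsTotallySymmetric Y) (h5 : 5 ≤ Nat.card α)
    (hcard : Y.ncard + 1 = Nat.card α) (ha : stabilizer (Perm α) a ≤ normalizer Y) :
    ∃ y ∈ Y, y a ≠ a := by
  by_contra! hfix
  have hcomm : Y ⊆ centralizer Y := fun y hy w hw =>
    (hY.commute_of_mem_normalizer (by omega) hy (ha (hfix y hy)) hw).symm.eq
  rw [hY.centralizer_eq_bot h5 hcard, coe_bot] at hcomm
  have := Set.ncard_le_ncard hcomm
  rw [Set.ncard_singleton] at this
  omega

end IsTotallySymmetric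

theorem bijOn_apply_of_stabilizer_le_normalizer (hcard : Y.ncard + 1 = Nat.card α)
    (ha : stabilizer (Perm α) a ≤ normalizer Y) {y : Perm α} (hy : y ∈ Y) (hya : y a ≠ a) :
    Set.BijOn (fun z : Perm α => z a) Y {a}ᶜ := by
  classical
  have hcompl : ({a}ᶜ : Set α).ncard = Y.ncard := by
    rw [Set.ncard_compl, Set.ncard_singleton, ← hcard, Nat.add_sub_cancel]
  have hsurj : Set.SurjOn (fun z : Perm α => z a) Y {a}ᶜ := by
    intro b hb
    have hga : swap (y a) b a = a := swap_apply_of_ne_of_ne hya.symm (Ne.symm hb)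
    refine ⟨swap (y a) b * y * (swap (y a) b)⁻¹, (ha hga y).1 hy, ?_⟩
    simp [hga]
  have himage : {a}ᶜ = (fun z : Perm α => z a) '' Y :=
    Set.eq_of_subset_of_ncard_le hsurj (hcompl ▸ Set.ncard_image_le Y.toFinite) (Set.toFinite _)
  rw [himage] at hcompl ⊢
  exact ((Set.ncard_image_iff Y.toFinite).1 hcompl).bijOn_image

theorem eq_swap_apply_of_stabilizer_le_normalizer [DecidableEq α] (h5 : 5 ≤ Nat.card α)
    (hinj : Set.InjOn (fun z : Perm α => z a) Y) (ha : stabilizer (Perm α) a ≤ normalizer Y)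
    {y : Perm α} (hy : y ∈ Y) (hya : y a ≠ a) : y = swap a (y a) := by
  have hfix : ∀ c, c ≠ a → c ≠ y a → y c = c := by
    intro c hca hcy
    obtain ⟨d, hd⟩ := Cardinal.exists_notMem_of_length_lt [a, y a, c, y c] <| by
      rw [← Nat.cast_card]
      exact_mod_cast h5
    simp only [List.mem_cons, List.not_mem_nil, or_false, not_or] at hd
    obtain ⟨hda, hdya, hdc, hdyc⟩ := hd
    have hmem : swap c d * y * (swap c d)⁻¹ ∈ Y :=
      (ha (swap_apply_of_ne_of_ne hca.symm (Ne.symm hda)) y).1 hy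
    have hconj : swap c d * y * (swap c d)⁻¹ = y := hinj hmem hy <| by
      simp [swap_apply_of_ne_of_ne, hca.symm, hcy.symm, Ne.symm hda, Ne.symm hdya]
    exact apply_eq_self_of_commute_swap (mul_inv_eq_iff_eq_mul.1 hconj).symm hdc hdyc
  have hya' : y (y a) = a := by
    by_contra h
    exact hya (y.injective (y.injective (hfix _ h (y.injective.ne hya))))
  ext c
  rcases eq_or_ne c a with rfl | hca
  · rw [swap_apply_left]
  rcases eq_or_ne c (y a) with rfl | hcy
  · rw [swap_apply_right, hya']
  · rw [swap_apply_of_ne_of_ne hca hcy, hfix c hca hcy]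

theorem setOf_swap_eq_of_stabilizer_le_normalizer [DecidableEq α] (h5 : 5 ≤ Nat.card α)
    (hcard : Y.ncard + 1 = Nat.card α) (ha : stabilizer (Perm α) a ≤ normalizer Y) {y : Perm α}
    (hy : y ∈ Y) (hya : y a ≠ a) : {σ | ∃ i, i ≠ a ∧ σ = swap a i} = Y := by
  have hbij := bijOn_apply_of_stabilizer_le_normalizer hcard ha hy hya
  have hswap : ∀ z ∈ Y, z = swap a (z a) := fun z hz =>
    eq_swap_apply_of_stabilizer_le_normalizer h5 hbij.injOn ha hz (hbij.mapsTo hz)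
  ext σ
  constructor
  · rintro ⟨i, hi, rfl⟩
    obtain ⟨z, hz, rfl⟩ := hbij.surjOn hi
    exact hswap z hz ▸ hz
  · exact fun hσ => ⟨σ a, hbij.mapsTo hσ, hswap σ hσ⟩

end Perm

theorem totally_symmetric_max_S6_general {α : Type*} [Finite α] [DecidableEq α]
    (h5 : 5 ≤ Nat.card α) (a : α) (Y : Set (Perm α)) (hY : IsTotallySymmetric Y)
    (hcard : Y.ncard + 1 = Nat.card α) :
    ∃ f : MulAut (Perm α), f '' {σ | ∃ i, i ≠ a ∧ σ = swap a i} = Y := by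
  obtain ⟨f, hf⟩ := exists_mulAut_map_eq_stabilizer (hY.normalCore_normalizer_eq_bot h5 hcard)
    (hY.index_normalizer h5 hcard) a
  have hfY : IsTotallySymmetric (f '' Y) := hY.image (f := f.toMonoidHom) f.injective
  have hfcard : (f '' Y).ncard + 1 = Nat.card α := by
    rw [Set.ncard_image_of_injective Y f.injective, hcard]
  have ha : stabilizer (Perm α) a ≤ normalizer (f '' Y) := by
    rw [← hf, map_normalizer_eq_normalizer_image]
  obtain ⟨y, hy, hya⟩ := hfY.exists_mem_apply_ne h5 hfcard ha
  refine ⟨f.symm, ?_⟩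
  rw [setOf_swap_eq_of_stabilizer_le_normalizer h5 hfcard ha hy hya]
  exact f.toEquiv.symm_image_image Y

theorem totally_symmetric_max_S6 (Y : Set (Equiv.Perm (Fin 6)))
    (hY : IsTotallySymmetric Y) (hcard : Y.ncard = 5) :
    ∃ φ : MulAut (Equiv.Perm (Fin 6)),
      (φ : Equiv.Perm (Fin 6) → Equiv.Perm (Fin 6)) ''
        {σ : Equiv.Perm (Fin 6) | ∃ i : Fin 6, i ≠ 0 ∧ σ = Equiv.swap 0 i} = Y :=
  totally_symmetric_max_S6_general (by simp) 0 Y hY (by simp [hcard])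
end

section
/- Let Y ⊆ S_4 be a totally symmetric set of cardinality 3. Then Y is conjugate to X_4 = {(1 2), (1 3), (1 4)}, or Y is conjugate to {(1 2), (1 3), (2 3)}, or Y is equal to {(1 2)(3 4), (1 3)(2 4), (1 4)(2 3)}. -/
open Equiv

namespace IsTotallySymmetric

variable {G : Type*} [Group G] {X : Set G} {x y z w : G}

theorem exists_conj_swap (hX : IsTotallySymmetric X) (hx : x ∈ X) (hy : y ∈ X) :
    ∃ g : G, g * x * g⁻¹ = y ∧ g * y * g⁻¹ = x ∧ ∀ z ∈ X, z ≠ x → z ≠ y → Commute g z := by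
  classical
  obtain ⟨g, hg⟩ := hX (swap ⟨x, hx⟩ ⟨y, hy⟩)
  refine ⟨g, by simpa using hg ⟨x, hx⟩, by simpa using hg ⟨y, hy⟩, fun z hz hzx hzy => ?_⟩
  have hgz := hg ⟨z, hz⟩
  rw [swap_apply_of_ne_of_ne (by simpa using hzx) (by simpa using hzy)] at hgz
  exact mul_inv_eq_iff_eq_mul.mp hgz

theorem isConj (hX : IsTotallySymmetric X) (hx : x ∈ X) (hy : y ∈ X) : IsConj x y :=
  let ⟨g, hg, _⟩ := hX.exists_conj_swap hx hy
  isConj_iff.mpr ⟨g, hg⟩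

theorem ne_one (hX : IsTotallySymmetric X) (hX' : X.Nontrivial) (hx : x ∈ X) : x ≠ 1 := by
  rintro rfl
  obtain ⟨y, hy, hy₁⟩ := hX'.exists_ne 1
  exact hy₁ (isConj_one_right.mp (hX.isConj hx hy))

theorem pow_eq_one_iff (hX : IsTotallySymmetric X) (hx : x ∈ X) (hy : y ∈ X) (n : ℕ) :
    x ^ n = 1 ↔ y ^ n = 1 := by
  have hconj : IsConj (x ^ n) (y ^ n) := (hX.isConj hx hy).pow n
  exact ⟨fun h => isConj_one_right.mp (h ▸ hconj), fun h => isConj_one_left.mp (h ▸ hconj)⟩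

theorem commute_iff_commute (hX : IsTotallySymmetric X) (hx : x ∈ X) (hy : y ∈ X) (hz : z ∈ X)
    (hw : w ∈ X) (hxy : x ≠ y) (hzw : z ≠ w) : Commute x y ↔ Commute z w := by
  have hne : (⟨x, hx⟩ : X) ≠ ⟨y, hy⟩ := Subtype.coe_ne_coe.mp hxy
  have hne' : (⟨z, hz⟩ : X) ≠ ⟨w, hw⟩ := Subtype.coe_ne_coe.mp hzw
  obtain ⟨π, hπx, hπy⟩ :=
    MulAction.is_two_pretransitive_iff.mp (Perm.isMultiplyPretransitive X 2) hne hne'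
  obtain ⟨g, hg⟩ := hX π
  have hgx : g * x * g⁻¹ = z := (hg ⟨x, hx⟩).trans (congrArg Subtype.val hπx)
  have hgy : g * y * g⁻¹ = w := (hg ⟨y, hy⟩).trans (congrArg Subtype.val hπy)
  rw [← hgx, ← hgy, Commute.conj_iff]

theorem not_commute_of_isMulCommutative_centralizer (hX : IsTotallySymmetric X) (hx : x ∈ X)
    (hy : y ∈ X) (hz : z ∈ X) (hxy : x ≠ y) (hxz : x ≠ z) (hyz : y ≠ z)
    (hcent : IsMulCommutative (Subgroup.centralizer {x})) : ¬Commute x y := by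
  intro hcomm
  obtain ⟨g, hgy, -, hg⟩ := hX.exists_conj_swap hy hz
  have hgx : g ∈ Subgroup.centralizer {x} :=
    Subgroup.mem_centralizer_singleton_iff.mpr (hg x hx hxy hxz)
  have hyx : y ∈ Subgroup.centralizer {x} := Subgroup.mem_centralizer_singleton_iff.mpr hcomm.symm
  have hgy_comm : Commute g y := setLike_mul_comm hgx hyx
  exact hyz (hgy_comm.mul_inv_cancel.symm.trans hgy)

end IsTotallySymmetric

namespace PermFinFour

variable {a b g : Perm (Fin 4)}

theorem isMulCommutative_centralizer_of_sq_ne_one (ha : a ^ 2 ≠ 1) :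
    IsMulCommutative (Subgroup.centralizer {a}) := by
  have key : ∀ a g : Perm (Fin 4), a ^ 2 ≠ 1 → g * a = a * g → ∃ k : Fin 4, a ^ (k : ℕ) = g := by
    decide +kernel
  have hle : Subgroup.centralizer {a} ≤ Subgroup.zpowers a := by
    intro g hg
    obtain ⟨k, rfl⟩ := key a g ha (Subgroup.mem_centralizer_singleton_iff.mp hg)
    exact Subgroup.npow_mem_zpowers a k
  exact .of_setLike_mul_comm fun g hg h hh => setLike_mul_comm (hle hg) (hle hh)

theorem eq_one_of_commute_of_not_commute (ha : a ^ 2 ≠ 1) (hb : b ^ 2 ≠ 1) (hab : ¬Commute a b)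
    (hga : Commute g a) (hgb : Commute g b) : g = 1 := by
  have key : ∀ a b : Perm (Fin 4), a ^ 2 ≠ 1 → b ^ 2 ≠ 1 → a * b ≠ b * a →
      ∀ g, g * a = a * g → g * b = b * g → g = 1 := by
    decide +kernel
  exact key a b ha hb hab g hga hgb

theorem eq_sq_of_commute_of_sq_eq_one (ha : a ^ 2 ≠ 1) (hga : Commute g a) (hg : g ^ 2 = 1)
    (hg₁ : g ≠ 1) : g = a ^ 2 := by
  have key : ∀ a g : Perm (Fin 4), a ^ 2 ≠ 1 → g * a = a * g → g ^ 2 = 1 → g ≠ 1 →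
      g = a ^ 2 := by
    decide +kernel
  exact key a g ha hga hg hg₁

theorem commute_sq_sq_of_pow_four_eq_one (ha : a ^ 4 = 1) (hb : b ^ 4 = 1) :
    Commute (a ^ 2) (b ^ 2) := by
  have key : ∀ a b : Perm (Fin 4), a ^ 4 = 1 → b ^ 4 = 1 → a ^ 2 * b ^ 2 = b ^ 2 * a ^ 2 := by
    decide +kernel
  exact key a b ha hb

/-- The set of products of two disjoint transpositions in `S₄`, which are the non-trivial elements
of the normal Klein four-group. -/
def doubleTranspositions : Set (Perm (Fin 4)) :=
  {swap 0 1 * swap 2 3, swap 0 2 * swap 1 3, swap 0 3 * swap 1 2}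

theorem isSwap_or_mem_doubleTranspositions (ha : a ^ 2 = 1) (ha₁ : a ≠ 1) :
    a.IsSwap ∨ a ∈ doubleTranspositions := by
  have key : ∀ a : Perm (Fin 4), a ^ 2 = 1 → a ≠ 1 → (∃ i j, i ≠ j ∧ a = swap i j) ∨
      a = swap 0 1 * swap 2 3 ∨ a = swap 0 2 * swap 1 3 ∨ a = swap 0 3 * swap 1 2 := by
    decide +kernel
  exact key a ha ha₁

theorem eq_doubleTranspositions_of_subset {Y : Set (Perm (Fin 4))} (hY : Y ⊆ doubleTranspositions)
    (hcard : 3 ≤ Y.ncard) : Y = doubleTranspositions := by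
  refine Set.eq_of_subset_of_ncard_le hY (le_trans ?_ hcard)
  calc doubleTranspositions.ncard
      ≤ ({swap 0 2 * swap 1 3, swap 0 3 * swap 1 2} : Set (Perm (Fin 4))).ncard + 1 :=
        Set.ncard_insert_le _ _
    _ ≤ ({swap 0 3 * swap 1 2} : Set (Perm (Fin 4))).ncard + 1 + 1 :=
        Nat.add_le_add_right (Set.ncard_insert_le _ _) 1
    _ = 3 := by rw [Set.ncard_singleton]

theorem sq_eq_one_of_isTotallySymmetric {X : Set (Perm (Fin 4))} (hX : IsTotallySymmetric X)
    {x y z : Perm (Fin 4)} (hx : x ∈ X) (hy : y ∈ X) (hz : z ∈ X)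
    (hxy : x ≠ y) (hxz : x ≠ z) (hyz : y ≠ z) : x ^ 2 = 1 := by
  by_contra hx₂
  have hy₂ : y ^ 2 ≠ 1 := (hX.pow_eq_one_iff hx hy 2).not.mp hx₂
  have hz₂ : z ^ 2 ≠ 1 := (hX.pow_eq_one_iff hx hz 2).not.mp hx₂
  have hxy_comm : ¬Commute x y := hX.not_commute_of_isMulCommutative_centralizer hx hy hz hxy hxz
    hyz (isMulCommutative_centralizer_of_sq_ne_one hx₂)
  have hyz_comm : ¬Commute y z := (hX.commute_iff_commute hx hy hy hz hxy hyz).not.mp hxy_comm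
  obtain ⟨g, hgy, hgz, hg⟩ := hX.exists_conj_swap hy hz
  have hgx : Commute g x := hg x hx hxy hxz
  have hg₁ : g ≠ 1 := by
    rintro rfl
    exact hyz (by simpa using hgy)
  have hg₂y : Commute (g ^ 2) y := by
    refine mul_inv_eq_iff_eq_mul.mp ?_
    calc g ^ 2 * y * (g ^ 2)⁻¹ = g * (g * y * g⁻¹) * g⁻¹ := by
          simp only [pow_two, mul_inv_rev, mul_assoc]
      _ = y := by rw [hgy, hgz]
  have hg₂ : g ^ 2 = 1 :=
    eq_one_of_commute_of_not_commute hx₂ hy₂ hxy_comm (hgx.pow_left 2) hg₂y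
  have hg_eq : g = x ^ 2 := eq_sq_of_commute_of_sq_eq_one hx₂ hgx hg₂ hg₁
  have hx₄ : x ^ 4 = 1 := by rw [← hg₂, hg_eq, ← pow_mul]
  have hy₄ : y ^ 4 = 1 := (hX.pow_eq_one_iff hx hy 4).mp hx₄
  have hyz₂ : y ^ 2 = z ^ 2 := by
    have hgy₂ : Commute g (y ^ 2) := hg_eq ▸ commute_sq_sq_of_pow_four_eq_one hx₄ hy₄
    rw [← hgy, conj_pow, hgy₂.mul_inv_cancel]
  exact hy₂ (eq_one_of_commute_of_not_commute hy₂ hz₂ hyz_comm (Commute.pow_self y 2)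
    (hyz₂ ▸ Commute.pow_self z 2))

end PermFinFour

theorem exists_apply_ne_of_not_commute {α : Type*} {a b : Perm α} (hab : ¬Commute a b) :
    ∃ p, a p ≠ p ∧ b p ≠ p := by
  by_contra! h
  exact hab (Perm.Disjoint.commute fun p => or_iff_not_imp_left.mpr (h p))

section Swap

variable {α : Type*} [DecidableEq α] {a b c : Perm α} {p q : α}

theorem eq_swap_apply_of_isSwap (ha : a.IsSwap) (hp : a p ≠ p) : a = swap p (a p) := by
  obtain ⟨i, j, -, rfl⟩ := ha
  obtain ⟨-, rfl | rfl⟩ := swap_apply_ne_self_iff.mp hp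
  · rw [swap_apply_left]
  · rw [swap_apply_right, swap_comm]

theorem eq_or_eq_apply_of_isSwap (ha : a.IsSwap) (hp : a p ≠ p) (hq : a q ≠ q) :
    q = p ∨ q = a p := by
  rw [eq_swap_apply_of_isSwap ha hp] at hq
  exact (swap_apply_ne_self_iff.mp hq).2

theorem eq_of_isSwap_of_apply_eq (ha : a.IsSwap) (hb : b.IsSwap) (hp : a p ≠ p)
    (hab : a p = b p) : a = b :=
  calc a = swap p (a p) := eq_swap_apply_of_isSwap ha hp
    _ = swap p (b p) := by rw [hab]
    _ = b := (eq_swap_apply_of_isSwap hb (hab ▸ hp)).symm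

theorem isSwap_of_isConj (ha : a.IsSwap) (hab : IsConj a b) : b.IsSwap := by
  obtain ⟨g, rfl⟩ := isConj_iff.mp hab
  obtain ⟨i, j, hij, rfl⟩ := ha
  exact ⟨g i, g j, g.injective.ne hij, (swap_apply_apply g i j).symm⟩

theorem disjoint_of_commute_of_isSwap (ha : a.IsSwap) (hb : b.IsSwap) (hab : a ≠ b)
    (hcomm : Commute a b) : a.Disjoint b := by
  intro p
  by_contra! ⟨hap, hbp⟩
  have hbp_fixed : a (b p) = b p := by
    by_contra h
    rcases eq_or_eq_apply_of_isSwap ha hap h with h | h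
    · exact hbp h
    · exact hab (eq_of_isSwap_of_apply_eq ha hb hap h.symm)
  exact hap (b.injective ((DFunLike.congr_fun hcomm p).symm.trans hbp_fixed))

theorem six_le_card_of_disjoint_of_isSwap [Fintype α] (ha : a.IsSwap) (hb : b.IsSwap)
    (hc : c.IsSwap) (hab : a.Disjoint b) (hac : a.Disjoint c) (hbc : b.Disjoint c) :
    6 ≤ Fintype.card α :=
  calc 6 = a.support.card + b.support.card + c.support.card := by
        rw [Perm.card_support_eq_two.mpr ha, Perm.card_support_eq_two.mpr hb,
          Perm.card_support_eq_two.mpr hc]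
    _ = (a * b * c).support.card := by
        rw [(hac.mul_left hbc).card_support_mul, hab.card_support_mul]
    _ ≤ Fintype.card α := Finset.card_le_univ _

theorem IsTotallySymmetric.not_commute_of_isSwap [Fintype α] {X : Set (Perm α)}
    (hX : IsTotallySymmetric X) (hα : Fintype.card α < 6) (ha : a ∈ X) (hb : b ∈ X) (hc : c ∈ X)
    (hab : a ≠ b) (hac : a ≠ c) (hbc : b ≠ c) (ha_swap : a.IsSwap) : ¬Commute a b := by
  intro hcomm
  have hb_swap : b.IsSwap := isSwap_of_isConj ha_swap (hX.isConj ha hb)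
  have hc_swap : c.IsSwap := isSwap_of_isConj ha_swap (hX.isConj ha hc)
  have hac_comm : Commute a c := (hX.commute_iff_commute ha hb ha hc hab hac).mp hcomm
  have hbc_comm : Commute b c := (hX.commute_iff_commute ha hb hb hc hab hbc).mp hcomm
  exact hα.not_ge <| six_le_card_of_disjoint_of_isSwap ha_swap hb_swap hc_swap
    (disjoint_of_commute_of_isSwap ha_swap hb_swap hab hcomm)
    (disjoint_of_commute_of_isSwap ha_swap hc_swap hac hac_comm)
    (disjoint_of_commute_of_isSwap hb_swap hc_swap hbc hbc_comm)

theorem apply_ne_of_not_commute_of_isSwap (ha : a.IsSwap) (hap : a p ≠ p) (hbp : b p = p)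
    (hab : ¬Commute a b) : b (a p) ≠ a p := by
  obtain ⟨q, haq, hbq⟩ := exists_apply_ne_of_not_commute hab
  rcases eq_or_eq_apply_of_isSwap ha hap haq with rfl | rfl
  · exact absurd hbp hbq
  · exact hbq

theorem star_or_triangle_of_not_commute (ha : a.IsSwap) (hb : b.IsSwap) (hc : c.IsSwap)
    (hab : ¬Commute a b) (hac : ¬Commute a c) (hbc : ¬Commute b c) :
    (∃ v : Fin 4 ↪ α, a = swap (v 0) (v 1) ∧ b = swap (v 0) (v 2) ∧ c = swap (v 0) (v 3)) ∨
      ∃ v : Fin 3 ↪ α, a = swap (v 0) (v 1) ∧ b = swap (v 0) (v 2) ∧ c = swap (v 1) (v 2) := by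
  obtain ⟨p, hap, hbp⟩ := exists_apply_ne_of_not_commute hab
  have ha_eq : a = swap p (a p) := eq_swap_apply_of_isSwap ha hap
  have hb_eq : b = swap p (b p) := eq_swap_apply_of_isSwap hb hbp
  have hab_ne : a p ≠ b p := fun h => hab (eq_of_isSwap_of_apply_eq ha hb hap h ▸ .refl a)
  by_cases hcp : c p = p
  · have hcap : c (a p) ≠ a p := apply_ne_of_not_commute_of_isSwap ha hap hcp hac
    have hcbp : c (b p) ≠ b p := apply_ne_of_not_commute_of_isSwap hb hbp hcp hbc
    have hbp_eq : b p = c (a p) :=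
      (eq_or_eq_apply_of_isSwap hc hcap hcbp).resolve_left hab_ne.symm
    have hc_eq : c = swap (a p) (b p) := hbp_eq ▸ eq_swap_apply_of_isSwap hc hcap
    have hinj : Function.Injective ![p, a p, b p] := by
      simp [Function.Injective, Fin.forall_fin_succ, hap, hbp, hab_ne, hap.symm, hbp.symm,
        hab_ne.symm]
    exact .inr ⟨⟨_, hinj⟩, ha_eq, hb_eq, hc_eq⟩
  · have hc_eq : c = swap p (c p) := eq_swap_apply_of_isSwap hc hcp
    have hac_ne : a p ≠ c p := fun h => hac (eq_of_isSwap_of_apply_eq ha hc hap h ▸ .refl a)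
    have hbc_ne : b p ≠ c p := fun h => hbc (eq_of_isSwap_of_apply_eq hb hc hbp h ▸ .refl b)
    have hinj : Function.Injective ![p, a p, b p, c p] := by
      simp [Function.Injective, Fin.forall_fin_succ, hap, hbp, hcp, hab_ne, hac_ne, hbc_ne,
        hap.symm, hbp.symm, Ne.symm hcp, hab_ne.symm, hac_ne.symm, hbc_ne.symm]
    exact .inl ⟨⟨_, hinj⟩, ha_eq, hb_eq, hc_eq⟩

theorem IsTotallySymmetric.star_or_triangle [Fintype α] {X : Set (Perm α)}
    (hX : IsTotallySymmetric X) (hα : Fintype.card α < 6) (ha : a ∈ X) (hb : b ∈ X) (hc : c ∈ X)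
    (hab : a ≠ b) (hac : a ≠ c) (hbc : b ≠ c) (ha_swap : a.IsSwap) :
    (∃ v : Fin 4 ↪ α, a = swap (v 0) (v 1) ∧ b = swap (v 0) (v 2) ∧ c = swap (v 0) (v 3)) ∨
      ∃ v : Fin 3 ↪ α, a = swap (v 0) (v 1) ∧ b = swap (v 0) (v 2) ∧ c = swap (v 1) (v 2) := by
  have hab_comm : ¬Commute a b := hX.not_commute_of_isSwap hα ha hb hc hab hac hbc ha_swap
  exact star_or_triangle_of_not_commute ha_swap
    (isSwap_of_isConj ha_swap (hX.isConj ha hb)) (isSwap_of_isConj ha_swap (hX.isConj ha hc))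
    hab_comm ((hX.commute_iff_commute ha hb ha hc hab hac).not.mp hab_comm)
    ((hX.commute_iff_commute ha hb hb hc hab hbc).not.mp hab_comm)

theorem image_conj_insert_insert_singleton_swap (σ : Perm α) (i j k l m n : α) :
    (fun x => σ * x * σ⁻¹) '' {swap i j, swap k l, swap m n} =
      {swap (σ i) (σ j), swap (σ k) (σ l), swap (σ m) (σ n)} := by
  simp only [Set.image_insert_eq, Set.image_singleton, ← swap_apply_apply]

end Swap

theorem totally_symmetric_max_S4 (Y : Set (Equiv.Perm (Fin 4)))
    (hY : IsTotallySymmetric Y) (hcard : Y.ncard = 3) :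
    (∃ g : Equiv.Perm (Fin 4),
      (fun x => g * x * g⁻¹) ''
        ({Equiv.swap 0 1, Equiv.swap 0 2, Equiv.swap 0 3} : Set (Equiv.Perm (Fin 4))) = Y) ∨
    (∃ g : Equiv.Perm (Fin 4),
      (fun x => g * x * g⁻¹) ''
        ({Equiv.swap 0 1, Equiv.swap 0 2, Equiv.swap 1 2} : Set (Equiv.Perm (Fin 4))) = Y) ∨
    Y = ({Equiv.swap 0 1 * Equiv.swap 2 3, Equiv.swap 0 2 * Equiv.swap 1 3,
          Equiv.swap 0 3 * Equiv.swap 1 2} : Set (Equiv.Perm (Fin 4))) := by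
  obtain ⟨a, b, c, hab, hac, hbc, hY_eq⟩ := Set.ncard_eq_three.mp hcard
  have ha : a ∈ Y := by simp [hY_eq]
  have hb : b ∈ Y := by simp [hY_eq]
  have hc : c ∈ Y := by simp [hY_eq]
  by_cases ha_swap : a.IsSwap
  · rcases hY.star_or_triangle (by simp) ha hb hc hab hac hbc ha_swap
      with ⟨v, rfl, rfl, rfl⟩ | ⟨v, rfl, rfl, rfl⟩
    · exact .inl ⟨v.equivOfFiniteSelfEmbedding,
        (image_conj_insert_insert_singleton_swap ..).trans hY_eq.symm⟩
    · obtain ⟨σ, rfl⟩ :=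
        (Perm.isMultiplyPretransitive (Fin 4) 3).exists_smul_eq Fin.castSuccEmb v
      exact .inr (.inl ⟨σ, (image_conj_insert_insert_singleton_swap ..).trans hY_eq.symm⟩)
  · refine .inr (.inr (PermFinFour.eq_doubleTranspositions_of_subset (fun x hx => ?_) hcard.ge))
    have hx₁ : x ≠ 1 := hY.ne_one ⟨a, ha, b, hb, hab⟩ hx
    have hx₂ : x ^ 2 = 1 := (hY.pow_eq_one_iff ha hx 2).mp
      (PermFinFour.sq_eq_one_of_isTotallySymmetric hY ha hb hc hab hac hbc)
    exact (PermFinFour.isSwap_or_mem_doubleTranspositions hx₂ hx₁).resolve_left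
      fun hx_swap => ha_swap (isSwap_of_isConj hx_swap (hY.isConj hx ha))
end

section
/- Every totally symmetric subset of the symmetric group S_3 has cardinality at most 3. -/
/-!
An element `g` whose conjugation action realizes a permutation of `X` determines that permutation,
so choosing one for each permutation embeds `Equiv.Perm X` into the ambient group. When that group
is the symmetric group on `n ≥ 1` letters, this gives `|X|! ≤ n!`, hence `|X| ≤ n`.
-/

namespace IsTotallySymmetric

variable {G : Type*} [Group G] {X : Set G}

theorem nonempty_perm_embedding (hX : IsTotallySymmetric X) : Nonempty (Equiv.Perm X ↪ G) := by
  choose conjugator conjugator_spec using hX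
  refine ⟨conjugator, fun π σ h ↦ Equiv.ext fun x ↦ Subtype.ext ?_⟩
  rw [← conjugator_spec π x, ← conjugator_spec σ x, h]

theorem factorial_ncard_le_natCard [Finite G] (hX : IsTotallySymmetric X) :
    X.ncard.factorial ≤ Nat.card G := by
  obtain ⟨f⟩ := hX.nonempty_perm_embedding
  calc
    X.ncard.factorial = Nat.card (Equiv.Perm X) := by rw [Nat.card_perm, Nat.card_coe_set_eq]
    _ ≤ Nat.card G := Finite.card_le_of_embedding f

end IsTotallySymmetric

theorem totally_symmetric_S3_card_le_three_general {α : Type*} [Finite α] [Nonempty α]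
    {X : Set (Equiv.Perm α)} (hX : IsTotallySymmetric X) : X.ncard ≤ Nat.card α := by
  have factorial_le : X.ncard.factorial ≤ (Nat.card α).factorial :=
    hX.factorial_ncard_le_natCard.trans_eq Nat.card_perm
  contrapose! factorial_le
  exact (Nat.factorial_lt Nat.card_pos).mpr factorial_le

theorem totally_symmetric_S3_card_le_three (X : Set (Equiv.Perm (Fin 3)))
    (hX : IsTotallySymmetric X) : X.ncard ≤ 3 := by
  simpa only [Nat.card_fin] using totally_symmetric_S3_card_le_three_general hX
end

section
/- (Collision implies collapse, G-set version.) Let G be a group, let Z₁ and Z₂ be G-sets, let Y ⊆ Z₁ be a finite totally symmetric set, and let f : Z₁ → Z₂ be a G-equivariant map. Then either |f(Y)| = |Y| or |f(Y)| = 1, and in either case f(Y) is a totally symmetric subset of Z₂. -/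
/-- A subset `Y` of a `G`-set `Z` is *totally symmetric* if every permutation of `Y`
can be realized by the action of some element of `G`. -/
def IsTotallySymmetricOn (G : Type*) [Group G] {Z : Type*} [MulAction G Z] (Y : Set Z) : Prop :=
  ∀ π : Y ≃ Y, ∃ g : G, ∀ y : Y, g • (y : Z) = ((π y : Y) : Z)

/-!
A collision `f a = f b` with `a ≠ b` propagates to every other `c ∈ Y`: an element of `G` that
realizes the transposition of `b` and `c` fixes `a`, hence fixes `f a = f b`, yet moves `f b` to
`f c`. If there is no collision, `f` identifies the permutations of `Y` with those of `f '' Y`.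
-/

namespace IsTotallySymmetricOn

variable {G Z Z₁ Z₂ : Type*} [Group G] [MulAction G Z] [MulAction G Z₁] [MulAction G Z₂]

theorem of_subsingleton {Y : Set Z} (hY : Y.Subsingleton) : IsTotallySymmetricOn G Y :=
  fun π ↦ ⟨1, fun y ↦ by rw [one_smul, hY y.2 (π y).2]⟩

theorem exists_smul_eq_self_and_smul_eq {Y : Set Z} (hY : IsTotallySymmetricOn G Y) {a b c : Z}
    (ha : a ∈ Y) (hb : b ∈ Y) (hc : c ∈ Y) (hab : a ≠ b) (hac : a ≠ c) :
    ∃ g : G, g • a = a ∧ g • b = c := by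
  classical
  obtain ⟨g, hg⟩ := hY (Equiv.swap ⟨b, hb⟩ ⟨c, hc⟩)
  refine ⟨g, ?_, ?_⟩
  · simpa [Equiv.swap_apply_of_ne_of_ne, hab, hac] using hg ⟨a, ha⟩
  · simpa using hg ⟨b, hb⟩

variable {Y : Set Z₁}

theorem map_eq_of_collision (hY : IsTotallySymmetricOn G Y) (f : Z₁ →[G] Z₂) {a b c : Z₁}
    (ha : a ∈ Y) (hb : b ∈ Y) (hc : c ∈ Y) (hab : a ≠ b) (h : f a = f b) : f c = f a := by
  obtain rfl | hac := eq_or_ne a c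
  · rfl
  obtain ⟨g, hga, hgb⟩ := hY.exists_smul_eq_self_and_smul_eq ha hb hc hab hac
  calc
    f c = g • f b := by rw [← hgb, map_smul]
    _ = g • f a := by rw [h]
    _ = f a := by rw [← map_smul, hga]

theorem injOn_or_image_eq_singleton (hY : IsTotallySymmetricOn G Y) (f : Z₁ →[G] Z₂) :
    Set.InjOn f Y ∨ ∃ z, f '' Y = {z} := by
  by_contra! ⟨hinj, himage⟩
  obtain ⟨a, ha, b, hb, h, hab⟩ : ∃ a ∈ Y, ∃ b ∈ Y, f a = f b ∧ a ≠ b := by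
    simpa [Set.InjOn] using hinj
  refine himage (f a) (Set.eq_singleton_iff_unique_mem.2 ⟨Set.mem_image_of_mem f ha, ?_⟩)
  rintro _ ⟨c, hc, rfl⟩
  exact hY.map_eq_of_collision f ha hb hc hab h

theorem image_of_injOn (hY : IsTotallySymmetricOn G Y) (f : Z₁ →[G] Z₂) (hinj : Set.InjOn f Y) :
    IsTotallySymmetricOn G (f '' Y) := by
  intro π
  let e : Y ≃ f '' Y := Equiv.Set.imageOfInjOn f Y hinj
  have coe_e (y : Y) : (e y : Z₂) = f y := rfl
  obtain ⟨g, hg⟩ := hY (e.symm.permCongr π)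
  refine ⟨g, e.forall_congr_right.1 fun y ↦ ?_⟩
  calc
    g • (e y : Z₂) = f (g • (y : Z₁)) := by rw [coe_e, map_smul]
    _ = e (e.symm.permCongr π y) := by rw [hg, coe_e]
    _ = π (e y) := by simp [Equiv.permCongr_apply]

theorem image (hY : IsTotallySymmetricOn G Y) (f : Z₁ →[G] Z₂) :
    IsTotallySymmetricOn G (f '' Y) := by
  obtain hinj | ⟨z, hz⟩ := hY.injOn_or_image_eq_singleton f
  · exact hY.image_of_injOn f hinj
  · exact of_subsingleton (hz ▸ Set.subsingleton_singleton)

end IsTotallySymmetricOn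

theorem collision_implies_collapse_general {G Z₁ Z₂ : Type*} [Group G]
    [MulAction G Z₁] [MulAction G Z₂] {Y : Set Z₁} (hY : IsTotallySymmetricOn G Y)
    (f : Z₁ →[G] Z₂) :
    (Set.InjOn f Y ∨ ∃ z, f '' Y = {z}) ∧ IsTotallySymmetricOn G (f '' Y) :=
  ⟨hY.injOn_or_image_eq_singleton f, hY.image f⟩

theorem collision_implies_collapse {G Z₁ Z₂ : Type*} [Group G]
    [MulAction G Z₁] [MulAction G Z₂] (Y : Set Z₁) (hfin : Y.Finite)
    (hY : IsTotallySymmetricOn G Y) (f : Z₁ → Z₂)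
    (hf : ∀ (g : G) (z : Z₁), f (g • z) = g • f z) :
    ((f '' Y).ncard = Y.ncard ∨ (f '' Y).ncard = 1) ∧ IsTotallySymmetricOn G (f '' Y) := by
  obtain ⟨hcases, himage⟩ := collision_implies_collapse_general hY ⟨f, hf⟩
  exact ⟨hcases.imp Set.InjOn.ncard_image Set.ncard_eq_one.2, himage⟩
end

section
/- (Collision implies collapse, homomorphism version.) Let f : G → H be a group homomorphism and let X ⊆ G be a finite totally symmetric set. Then f(X) is a totally symmetric subset of H, and either |f(X)| = |X| or |f(X)| = 1. -/
/-!
If `f` is injective on `X`, then permutations of `f '' X` lift to `X`, and the images of the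
conjugating elements realize them. Otherwise `f a = f b` for distinct `a, b ∈ X`. For `c ∈ X` other
than `a`, an element realizing the transposition `(b c)` fixes `a` and carries `b` to `c`, so it
carries the collision `f a = f b` to `f a = f c`. Hence `f` is constant on `X`.
-/

lemma isTotallySymmetric_singleton {G : Type*} [Group G] (a : G) :
    IsTotallySymmetric ({a} : Set G) :=
  fun π => ⟨1, fun x => by rw [Subsingleton.elim (π x) x, one_mul, inv_one, mul_one]⟩

namespace IsTotallySymmetric

variable {G : Type*} [Group G] {X : Set G}

lemma exists_conj_eq_self_and_conj_eq (hX : IsTotallySymmetric X) {a b c : G}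
    (ha : a ∈ X) (hb : b ∈ X) (hc : c ∈ X) (hab : a ≠ b) (hac : a ≠ c) :
    ∃ g : G, g * a * g⁻¹ = a ∧ g * b * g⁻¹ = c := by
  classical
  obtain ⟨g, hg⟩ := hX (Equiv.swap ⟨b, hb⟩ ⟨c, hc⟩)
  have swap_a : Equiv.swap (⟨b, hb⟩ : X) ⟨c, hc⟩ ⟨a, ha⟩ = ⟨a, ha⟩ :=
    Equiv.swap_apply_of_ne_of_ne (Subtype.coe_ne_coe.mp hab) (Subtype.coe_ne_coe.mp hac)
  have swap_b : Equiv.swap (⟨b, hb⟩ : X) ⟨c, hc⟩ ⟨b, hb⟩ = ⟨c, hc⟩ :=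
    Equiv.swap_apply_left _ _
  exact ⟨g, (hg ⟨a, ha⟩).trans (congrArg Subtype.val swap_a),
    (hg ⟨b, hb⟩).trans (congrArg Subtype.val swap_b)⟩

lemma map_eq_of_collision {M F : Type*} [Mul M] [FunLike F G M] [MulHomClass F G M] (f : F)
    (hX : IsTotallySymmetric X) {a b c : G} (ha : a ∈ X) (hb : b ∈ X) (hc : c ∈ X)
    (hab : a ≠ b) (hfab : f a = f b) : f c = f a := by
  obtain rfl | hac := eq_or_ne a c
  · rfl
  obtain ⟨g, hga, hgb⟩ := hX.exists_conj_eq_self_and_conj_eq ha hb hc hab hac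
  calc
    f c = f (g * b * g⁻¹) := by rw [hgb]
    _ = f g * f b * f g⁻¹ := by rw [map_mul, map_mul]
    _ = f g * f a * f g⁻¹ := by rw [hfab]
    _ = f (g * a * g⁻¹) := by rw [map_mul, map_mul]
    _ = f a := by rw [hga]

lemma injOn_or_exists_image_eq_singleton {M F : Type*} [Mul M] [FunLike F G M]
    [MulHomClass F G M] (f : F) (hX : IsTotallySymmetric X) :
    Set.InjOn f X ∨ ∃ y, f '' X = {y} := by
  refine or_iff_not_imp_left.mpr fun hf => ?_
  obtain ⟨a, ha, b, hb, hfab, hab⟩ : ∃ a ∈ X, ∃ b ∈ X, f a = f b ∧ a ≠ b := by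
    simpa only [Set.InjOn, not_forall, exists_prop] using hf
  refine ⟨f a, Set.eq_singleton_iff_unique_mem.mpr ⟨Set.mem_image_of_mem f ha, ?_⟩⟩
  rintro _ ⟨c, hc, rfl⟩
  exact hX.map_eq_of_collision f ha hb hc hab hfab

variable {H : Type*} [Group H]

lemma image_of_injOn (f : G →* H) (hX : IsTotallySymmetric X) (hf : Set.InjOn f X) :
    IsTotallySymmetric (f '' X) := by
  intro π
  let e : X ≃ f '' X := Equiv.Set.imageOfInjOn f X hf
  have coe_e (x : X) : (e x : H) = f x := rfl
  obtain ⟨g, hg⟩ := hX (e.symm.permCongr π)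
  refine ⟨f g, e.surjective.forall.mpr fun x => ?_⟩
  calc
    f g * (e x : H) * (f g)⁻¹ = f (g * x * g⁻¹) := by rw [coe_e, map_mul, map_mul, map_inv]
    _ = e (e.symm.permCongr π x) := by rw [hg x, coe_e]
    _ = π (e x) := by rw [Equiv.permCongr_apply, Equiv.symm_symm, Equiv.apply_symm_apply]

end IsTotallySymmetric

theorem collision_implies_collapse_hom_general {G H : Type*} [Group G] [Group H]
    (f : G →* H) {X : Set G} (hX : IsTotallySymmetric X) :
    IsTotallySymmetric (f '' X) ∧ (Set.InjOn f X ∨ ∃ y, f '' X = {y}) := by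
  refine ⟨?_, hX.injOn_or_exists_image_eq_singleton f⟩
  obtain hf | ⟨y, hy⟩ := hX.injOn_or_exists_image_eq_singleton f
  · exact hX.image_of_injOn f hf
  · exact hy ▸ isTotallySymmetric_singleton y

theorem collision_implies_collapse_hom {G H : Type*} [Group G] [Group H]
    (f : G →* H) (X : Set G) (hfin : X.Finite) (hX : IsTotallySymmetric X) :
    IsTotallySymmetric (⇑f '' X) ∧ ((⇑f '' X).ncard = X.ncard ∨ (⇑f '' X).ncard = 1) :=
  (collision_implies_collapse_hom_general f hX).imp_right
    (Or.imp Set.InjOn.ncard_image Set.ncard_eq_one.mpr)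
end

section
/- Let n > m > 2 with (n, m) ≠ (4, 3), and let f : S_n → S_m be a group homomorphism. Then the image of f is cyclic. -/
/-!
A nontrivial normal subgroup of the symmetric group on at least five letters contains the
alternating group, which has index two, so a homomorphism out of it that is not injective has image
of order at most two. A homomorphism to a smaller symmetric group is not injective, by counting.
-/

theorem isCyclic_range_of_le_ker_of_index_dvd_prime {G G' : Type*} [Group G] [Group G']
    {f : G →* G'} {H : Subgroup G} (hHf : H ≤ f.ker) {p : ℕ} [Fact p.Prime]
    (hHp : H.index ∣ p) : IsCyclic f.range :=
  isCyclic_of_card_dvd_prime <|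
    Subgroup.index_ker f ▸ (Subgroup.index_dvd_of_le hHf).trans hHp

theorem alternatingGroup_le_ker_of_not_injective {α G : Type*} [Fintype α] [DecidableEq α]
    [Group G] (hα : 5 ≤ Nat.card α) {f : Equiv.Perm α →* G} (hf : ¬ Function.Injective f) :
    alternatingGroup α ≤ f.ker := by
  have ker_ne_bot : f.ker ≠ ⊥ := mt (MonoidHom.ker_eq_bot_iff f).1 hf
  exact Equiv.Perm.alternatingGroup_le_of_normal hα
    ((Subgroup.nontrivial_iff_ne_bot _).2 ker_ne_bot)

open scoped Nat in
theorem not_injective_perm_of_card_lt {α β : Type*} (hβ : 0 < Nat.card β)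
    (hβα : Nat.card β < Nat.card α) (f : Equiv.Perm α → Equiv.Perm β) :
    ¬ Function.Injective f := by
  have : Finite β := Nat.finite_of_card_ne_zero hβ.ne'
  have : Finite α := Nat.finite_of_card_ne_zero (by lia)
  intro hf
  have factorial_le : (Nat.card α)! ≤ (Nat.card β)! := by
    simpa only [Nat.card_perm] using Nat.card_le_card_of_injective f hf
  exact factorial_le.not_gt (Nat.factorial_lt_of_lt hβ hβα)

theorem hom_to_smaller_symm_group_cyclic_general {α G : Type*} [Group G] (hα : 5 ≤ Nat.card α)
    (f : Equiv.Perm α →* G) (hf : ¬ Function.Injective f) : IsCyclic f.range := by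
  classical
  have : Finite α := Nat.finite_of_card_ne_zero (by lia)
  have : Nontrivial α := Finite.one_lt_card_iff_nontrivial.1 (by lia)
  have : Fintype α := Fintype.ofFinite α
  exact isCyclic_range_of_le_ker_of_index_dvd_prime
    (alternatingGroup_le_ker_of_not_injective hα hf) alternatingGroup.index_eq_two.dvd

theorem hom_to_smaller_symm_group_cyclic (n m : ℕ) (hm : 2 < m) (hmn : m < n)
    (h43 : (n, m) ≠ (4, 3)) (f : Equiv.Perm (Fin n) →* Equiv.Perm (Fin m)) :
    IsCyclic f.range := by
  have five_le : 5 ≤ n := by grind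
  exact hom_to_smaller_symm_group_cyclic_general (by simpa using five_le) f
    (not_injective_perm_of_card_lt (by rw [Nat.card_fin]; lia) (by simpa using hmn) f)
end

section
/- Let n > 2 with n ∉ {4, 6}, and let f : S_n → S_n be a group homomorphism whose image is not cyclic. Then f is an inner automorphism: there exists σ ∈ S_n such that f(x) = σ x σ⁻¹ for all x ∈ S_n. -/
/-!
Off degree `4`, every nontrivial normal subgroup of a symmetric group contains the alternating
group, whose index is at most `2`. So an endomorphism with noncyclic image has trivial kernel, and
by finiteness it is an automorphism.

An automorphism preserves orders and the cardinalities of centralizers. In degree `2k + m`, the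
centralizer of a product of `k` disjoint transpositions has `m! * 2 ^ k * k!` elements; this agrees
with the value for a single transposition only if `k = 1` or `(k, m) = (3, 0)`. The second case is
degree `6`, so in every other degree automorphisms map transpositions to transpositions.

The transpositions moving a point `o` pairwise do not commute, so neither do their images: as
edges on the set of points, the images pairwise meet, and so form a star or a triangle. A triangle
is impossible, since the third edge `(q r)` is the conjugate of `(p r)` by `(p q)`, whereas the
conjugate of `(o j)` by `(o i)` is `(i j)`, which fixes `o`. Mapping `j` to the other end of the
image of `(o j)` in the star gives the conjugating permutation.
-/

open Equiv Equiv.Perm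
open scoped Nat

section Transpositions

variable {α : Type*} [DecidableEq α]

lemma eq_swap_apply_of_isSwap_s12 {s : Perm α} (hs : s.IsSwap) {p : α} (hp : s p ≠ p) :
    s = swap p (s p) := by
  refine hs.isCycle.eq_swap_of_apply_apply_eq_self hp ?_
  obtain ⟨x, y, -, rfl⟩ := hs
  rw [← Perm.mul_apply, swap_mul_self, Perm.one_apply]

lemma commute_swap_of_apply_eq_self {s : Perm α} {p q : α} (hp : s p = p) (hq : s q = q) :
    Commute s (swap p q) :=
  (mul_swap_eq_swap_mul s p q).trans (by rw [hp, hq])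

lemma swap_mul_swap_mul_swap_same {p q r : α} (hpr : p ≠ r) (hqr : q ≠ r) :
    swap p q * swap p r * swap p q = swap q r := by
  rw [swap_comm p r, swap_mul_swap_mul_swap hpr.symm hqr.symm]

lemma not_commute_swap_swap {o i j : α} (hi : i ≠ o) (hj : j ≠ o) (hij : i ≠ j) :
    ¬ Commute (swap o i) (swap o j) := by
  intro h
  have hji : j = i := by
    simpa [swap_apply_of_ne_of_ne hj hij.symm, swap_apply_of_ne_of_ne hi hij] using
      congr($(h.eq) o)
  exact hij hji.symm

lemma exists_eq_swap_of_not_commute {s t : Perm α} (hs : s.IsSwap) (ht : t.IsSwap)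
    (h : ¬ Commute s t) :
    ∃ p q r, p ≠ q ∧ p ≠ r ∧ q ≠ r ∧ s = swap p q ∧ t = swap p r := by
  obtain ⟨p, hsp, htp⟩ : ∃ p, s p ≠ p ∧ t p ≠ p := by
    by_contra! hst
    exact h (Perm.Disjoint.commute fun x ↦ or_iff_not_imp_left.mpr (hst x))
  have hs' := eq_swap_apply_of_isSwap_s12 hs hsp
  have ht' := eq_swap_apply_of_isSwap_s12 ht htp
  refine ⟨p, s p, t p, hsp.symm, htp.symm, fun hst ↦ h ?_, hs', ht'⟩
  rw [show s = t by rw [hs', hst, ← ht']]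

lemma apply_ne_or_eq_swap_of_not_commute {u : Perm α} (hu : u.IsSwap) {p q r : α} (hqr : q ≠ r)
    (hq : ¬ Commute u (swap p q)) (hr : ¬ Commute u (swap p r)) : u p ≠ p ∨ u = swap q r := by
  refine or_iff_not_imp_left.mpr fun hp ↦ ?_
  rw [not_not] at hp
  have hq' : u q ≠ q := fun h ↦ hq (commute_swap_of_apply_eq_self hp h)
  have hr' : u r ≠ r := fun h ↦ hr (commute_swap_of_apply_eq_self hp h)
  have huq := eq_swap_apply_of_isSwap_s12 hu hq'
  suffices h : u q = r by rwa [h] at huq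
  by_contra h
  rw [huq] at hr'
  exact hr' (swap_apply_of_ne_of_ne hqr.symm (Ne.symm h))

end Transpositions

section SwapPreserving

variable {α β : Type*} [Nontrivial α] [DecidableEq α] [DecidableEq β] {f : Perm α →* Perm β}

lemma exists_forall_map_swap_apply_ne (hf : Function.Injective f)
    (hswap : ∀ s : Perm α, s.IsSwap → (f s).IsSwap) (o : α) :
    ∃ p, ∀ k ≠ o, f (swap o k) p ≠ p := by
  have hstar : ∀ k ≠ o, (f (swap o k)).IsSwap := fun k hk ↦ hswap _ ⟨o, k, hk.symm, rfl⟩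
  have hnc : ∀ i ≠ o, ∀ j ≠ o, i ≠ j → ¬ Commute (f (swap o i)) (f (swap o j)) :=
    fun i hi j hj hij h ↦ not_commute_swap_swap hi hj hij (hf (by simpa using h.eq))
  obtain ⟨i, hi⟩ := exists_ne o
  by_cases! hij : ∃ j, j ≠ o ∧ i ≠ j
  · obtain ⟨j, hj, hij⟩ := hij
    obtain ⟨p, q, r, hpq, hpr, hqr, hfi, hfj⟩ :=
      exists_eq_swap_of_not_commute (hstar i hi) (hstar j hj) (hnc i hi j hj hij)
    refine ⟨p, fun k hk ↦ ?_⟩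
    obtain rfl | hki := eq_or_ne k i
    · simpa [hfi] using hpq.symm
    obtain rfl | hkj := eq_or_ne k j
    · simpa [hfj] using hpr.symm
    refine (apply_ne_or_eq_swap_of_not_commute (hstar k hk) hqr (hfi ▸ hnc k hk i hi hki)
      (hfj ▸ hnc k hk j hj hkj)).resolve_right fun htriangle ↦ ?_
    have hfk : f (swap o k) = f (swap i j) := by
      rw [htriangle, ← swap_mul_swap_mul_swap_same hpr hqr, ← hfi, ← hfj, ← map_mul, ← map_mul,
        swap_mul_swap_mul_swap_same hj.symm hij]
    have hko : k = o := by
      simpa [swap_apply_of_ne_of_ne hi.symm hj.symm] using congr($(hf hfk) o)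
    exact hk hko
  · obtain ⟨p, q, hpq, hfi⟩ := hstar i hi
    refine ⟨p, fun k hk ↦ ?_⟩
    simpa [← hij k hk, hfi] using hpq.symm

lemma exists_embedding_map_swap (hf : Function.Injective f)
    (hswap : ∀ s : Perm α, s.IsSwap → (f s).IsSwap) :
    ∃ σ : α ↪ β, ∀ i j, f (swap i j) = swap (σ i) (σ j) := by
  obtain ⟨o⟩ := Nontrivial.to_nonempty (α := α)
  obtain ⟨p, hp⟩ := exists_forall_map_swap_apply_ne hf hswap o
  have hstar : ∀ k, f (swap o k) = swap p (f (swap o k) p) := by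
    intro k
    obtain rfl | hk := eq_or_ne k o
    · simp [← Perm.one_def]
    · exact eq_swap_apply_of_isSwap_s12 (hswap _ ⟨o, k, hk.symm, rfl⟩) (hp k hk)
  have hinj : Function.Injective fun k ↦ f (swap o k) p := by
    intro k l (hkl : f (swap o k) p = f (swap o l) p)
    have hfkl : f (swap o k) = f (swap o l) := by rw [hstar k, hstar l, hkl]
    simpa using congr($(hf hfkl) o)
  obtain ⟨σ, hσ⟩ : ∃ σ : α ↪ β, ∀ k, σ k = f (swap o k) p := ⟨⟨_, hinj⟩, fun _ ↦ rfl⟩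
  have hσo : σ o = p := by simp [hσ, ← Perm.one_def]
  have hfσ : ∀ k, f (swap o k) = swap (σ o) (σ k) := by simpa only [hσo, hσ] using hstar
  refine ⟨σ, fun i j ↦ ?_⟩
  obtain rfl | hij := eq_or_ne i j
  · simp [← Perm.one_def]
  obtain rfl | hjo := eq_or_ne o j
  · rw [swap_comm i, hfσ, swap_comm]
  rw [← swap_mul_swap_mul_swap_same hjo hij, map_mul, map_mul, hfσ, hfσ,
    swap_mul_swap_mul_swap_same (σ.injective.ne hjo) (σ.injective.ne hij)]

end SwapPreserving

lemma exists_eq_conj_of_map_isSwap {α : Type*} [Finite α] [DecidableEq α] {f : Perm α →* Perm α}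
    (hf : Function.Injective f) (hswap : ∀ s : Perm α, s.IsSwap → (f s).IsSwap) :
    ∃ σ : Perm α, f = (MulAut.conj σ).toMonoidHom := by
  obtain _ | _ := subsingleton_or_nontrivial α
  · exact ⟨1, MonoidHom.ext fun _ ↦ Subsingleton.elim _ _⟩
  obtain ⟨σ, hσ⟩ := exists_embedding_map_swap hf hswap
  refine ⟨Equiv.ofBijective σ (Finite.injective_iff_bijective.mp σ.injective),
    MonoidHom.eq_of_eqOn_dense closure_isSwap ?_⟩
  rintro _ ⟨i, j, -, rfl⟩
  simp [hσ, ← swap_apply_apply]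

section Centralizers

lemma nat_card_centralizer_map {G H : Type*} [Group G] [Group H] (e : G ≃* H) (g : G) :
    Nat.card (Subgroup.centralizer {e g}) = Nat.card (Subgroup.centralizer {g}) :=
  Nat.card_congr (e.toEquiv.subtypeEquiv fun x ↦ by
    simp [Subgroup.mem_centralizer_singleton_iff, ← map_mul]).symm

lemma nat_card_centralizer_of_cycleType_eq_replicate {α : Type*} [Fintype α] [DecidableEq α]
    {t : Perm α} {k l : ℕ} (ht : t.cycleType = Multiset.replicate k l) :
    Nat.card (Subgroup.centralizer {t}) = (Fintype.card α - k * l)! * l ^ k * k ! := by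
  rw [Equiv.Perm.nat_card_centralizer, ht]
  obtain rfl | hk := eq_or_ne k 0
  · simp
  · simp [Multiset.toFinset_replicate, hk]

lemma two_pow_mul_factorial_lt {k : ℕ} (hk : 3 ≤ k) : 2 ^ k * (k + 1)! < (2 * k)! := by
  induction k, hk using Nat.le_induction with
  | base => decide
  | succ k hk ih =>
    calc 2 ^ (k + 1) * (k + 1 + 1)! = 2 ^ k * (k + 1)! * (2 * (k + 2)) := by
          rw [Nat.factorial_succ (k + 1)]; ring
      _ < (2 * k)! * ((2 * k + 2) * (2 * k + 1)) :=
          Nat.mul_lt_mul_of_lt_of_le ih (by nlinarith) (by positivity)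
      _ = (2 * (k + 1))! := by
          rw [show 2 * (k + 1) = 2 * k + 1 + 1 by ring, Nat.factorial_succ, Nat.factorial_succ]
          ring

lemma eq_zero_or_eq_two_of_factorial_mul_eq {k m : ℕ}
    (h : m ! * (2 ^ k * (k + 1)!) = (m + 2 * k)!) : k = 0 ∨ k = 2 ∧ m = 0 := by
  replace h : 2 ^ k * (k + 1)! = (m + 1).ascFactorial (2 * k) := by
    rwa [← m.factorial_mul_ascFactorial, Nat.mul_right_inj m.factorial_ne_zero] at h
  have hk : k < 3 := by
    by_contra! hk
    have := (two_pow_mul_factorial_lt hk).trans_eq (Nat.one_ascFactorial _).symm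
    exact (this.trans_le (Nat.ascFactorial_le _ (by omega))).ne h
  obtain rfl | hm := m.eq_zero_or_pos
  · interval_cases k <;> revert h <;> decide
  · have hle := h.symm ▸ Nat.ascFactorial_le (2 * k) (show 2 ≤ m + 1 by omega)
    interval_cases k
    · exact .inl rfl
    · exact absurd hle (by decide)
    · exact absurd hle (by decide)

lemma isSwap_of_nat_card_centralizer_eq {α : Type*} [Fintype α] [DecidableEq α]
    (h6 : Fintype.card α ≠ 6) {s t : Perm α} (hs : s.IsSwap) (ht : orderOf t = 2)
    (h : Nat.card (Subgroup.centralizer {t}) = Nat.card (Subgroup.centralizer {s})) :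
    t.IsSwap := by
  obtain ⟨k, hk⟩ := cycleType_prime_order (ht ▸ Nat.prime_two)
  rw [ht] at hk
  obtain ⟨m, hm⟩ : ∃ m, Fintype.card α = 2 * (k + 1) + m := by
    refine Nat.exists_eq_add_of_le ?_
    simpa only [← sum_cycleType, hk, Multiset.sum_replicate, smul_eq_mul, mul_comm 2] using
      t.support.card_le_univ
  rw [nat_card_centralizer_of_cycleType_eq_replicate hk,
    nat_card_centralizer_of_cycleType_eq_replicate (k := 1) (isSwap_iff_cycleType.mp hs), hm,
    show 2 * (k + 1) + m - (k + 1) * 2 = m by omega,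
    show 2 * (k + 1) + m - 1 * 2 = m + 2 * k by omega, pow_succ, Nat.factorial_one] at h
  obtain rfl | ⟨rfl, rfl⟩ :=
    eq_zero_or_eq_two_of_factorial_mul_eq (k := k) (m := m) (by linarith)
  · exact isSwap_iff_cycleType.mpr hk
  · exact absurd hm h6

end Centralizers

theorem mulAut_conj_surjective_of_card_ne_six {α : Type*} [Finite α] (h6 : Nat.card α ≠ 6) :
    Function.Surjective (MulAut.conj : Perm α →* MulAut (Perm α)) := by
  classical
  have := Fintype.ofFinite α
  rw [Nat.card_eq_fintype_card] at h6
  intro e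
  obtain ⟨σ, hσ⟩ := exists_eq_conj_of_map_isSwap (f := e.toMonoidHom) e.injective fun s hs ↦
    isSwap_of_nat_card_centralizer_eq h6 hs ((e.orderOf_eq s).trans hs.orderOf)
      (nat_card_centralizer_map e s)
  exact ⟨σ, MulEquiv.toMonoidHom_injective hσ.symm⟩

section NormalSubgroups

variable {α : Type*} [DecidableEq α] {N : Subgroup (Perm α)} [N.Normal]

lemma eq_top_of_normal_of_isSwap_mem [Finite α] {s : Perm α} (hs : s.IsSwap) (hsN : s ∈ N) :
    N = ⊤ := by
  rw [eq_top_iff, ← closure_isSwap, Subgroup.closure_le]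
  rintro _ ⟨c, d, hcd, rfl⟩
  obtain ⟨a, b, hab, rfl⟩ := hs
  obtain ⟨x, hx⟩ := isConj_iff.mp (isConj_swap hab hcd)
  exact hx ▸ Subgroup.Normal.conj_mem ‹_› _ hsN x

variable [Fintype α]

lemma alternatingGroup_le_of_normal_of_isThreeCycle_mem {g : Perm α} (hg : g.IsThreeCycle)
    (hgN : g ∈ N) : alternatingGroup α ≤ N := by
  rw [← closure_three_cycles_eq_alternating, Subgroup.closure_le]
  intro c hc
  obtain ⟨x, rfl⟩ := isConj_iff.mp (isConj_iff_cycleType_eq.mpr (hg.trans hc.symm))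
  exact Subgroup.Normal.conj_mem ‹_› g hgN x

lemma alternatingGroup_le_of_normal_of_card_ne_four (h4 : Fintype.card α ≠ 4) (hN : N ≠ ⊥) :
    alternatingGroup α ≤ N := by
  obtain h5 | h3 : 5 ≤ Fintype.card α ∨ Fintype.card α ≤ 3 := by omega
  · exact alternatingGroup_le_of_normal (by simpa using h5) (N.nontrivial_iff_ne_bot.mpr hN)
  obtain ⟨x, hxN, hx⟩ := N.bot_or_exists_ne_one.resolve_left hN
  have hle : x.support.card ≤ 3 := x.support.card_le_univ.trans h3
  have hlt : 1 < x.support.card := one_lt_card_support_of_ne_one hx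
  obtain hx2 | hx3 : x.support.card = 2 ∨ x.support.card = 3 := by omega
  · exact (eq_top_of_normal_of_isSwap_mem (card_support_eq_two.mp hx2) hxN).symm ▸ le_top
  · exact alternatingGroup_le_of_normal_of_isThreeCycle_mem
      (card_support_eq_three_iff.mp hx3) hxN

lemma isCyclic_range_of_alternatingGroup_le_ker {G : Type*} [Group G] {f : Perm α →* G}
    (h : alternatingGroup α ≤ f.ker) : IsCyclic f.range := by
  refine isCyclic_of_card_dvd_prime (p := 2) ?_
  rw [← Subgroup.index_ker]
  refine (Subgroup.index_dvd_of_le h).trans ?_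
  obtain _ | _ := subsingleton_or_nontrivial α
  · simp [alternatingGroup.index_eq_one]
  · rw [alternatingGroup.index_eq_two]

end NormalSubgroups

lemma injective_of_not_isCyclic_range {α G : Type*} [Finite α] [Group G] (h4 : Nat.card α ≠ 4)
    {f : Perm α →* G} (hf : ¬ IsCyclic f.range) : Function.Injective f := by
  classical
  have := Fintype.ofFinite α
  rw [Nat.card_eq_fintype_card] at h4
  rw [← MonoidHom.ker_eq_bot_iff]
  by_contra hker
  exact hf (isCyclic_range_of_alternatingGroup_le_ker
    (alternatingGroup_le_of_normal_of_card_ne_four h4 hker))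

theorem noncyclic_endo_is_inner_general {α : Type*} [Finite α] (h4 : Nat.card α ≠ 4)
    (h6 : Nat.card α ≠ 6) (f : Perm α →* Perm α) (hf : ¬ IsCyclic f.range) :
    ∃ σ : Perm α, ∀ x : Perm α, f x = σ * x * σ⁻¹ := by
  have hbij := Finite.injective_iff_bijective.mp (injective_of_not_isCyclic_range h4 hf)
  obtain ⟨σ, hσ⟩ := mulAut_conj_surjective_of_card_ne_six h6 (MulEquiv.ofBijective f hbij)
  exact ⟨σ, fun x ↦ congr($hσ.symm x)⟩

theorem noncyclic_endo_is_inner (n : ℕ) (hn : 2 < n) (h4 : n ≠ 4) (h6 : n ≠ 6)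
    (f : Equiv.Perm (Fin n) →* Equiv.Perm (Fin n)) (hnc : ¬ IsCyclic f.range) :
    ∃ σ : Equiv.Perm (Fin n), ∀ x : Equiv.Perm (Fin n), f x = σ * x * σ⁻¹ :=
  noncyclic_endo_is_inner_general (by simpa using h4) (by simpa using h6) f hnc
end

section
/- The outer automorphism group of S_6, i.e., the quotient of the automorphism group of S_6 by its subgroup of inner automorphisms, has order 2 (equivalently, it is isomorphic to ℤ/2ℤ). -/
/-!
An automorphism `φ` of a finite symmetric group that maps transpositions to transpositions is inner:
the transpositions `φ (a b)` with `a` fixed and `b` varying share a point, and their other points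
define the conjugating permutation. Automorphisms preserve the sign, so a non-inner automorphism of
`S₆` maps every transposition to a product of three disjoint ones. As these form a single conjugacy
class, any two non-inner automorphisms differ by one that preserves transpositions, hence by an
inner one.

For the existence of a non-inner automorphism, `S₅` acts transitively and faithfully on its six
Sylow 5-subgroups, which gives a transitive subgroup `H` of index 6 in `S₆`. The action of `S₆` on
the six cosets of `H` is an automorphism taking `H` to the stabilizer of a point; it is not inner
because `H` itself fixes no point.
-/

open Equiv Equiv.Perm MulAction

section SwapPreserving

variable {α β : Type*}

theorem exists_apply_ne_of_not_commute_s14 {s t : Perm α} (h : ¬ Commute s t) :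
    ∃ x, s x ≠ x ∧ t x ≠ x := by
  contrapose! h
  exact Disjoint.commute fun x => or_iff_not_imp_left.mpr (h x)

variable [DecidableEq α] [DecidableEq β]

theorem eq_swap_of_isSwap_of_apply_ne {t : Perm α} (ht : t.IsSwap) {x y : α} (hxy : x ≠ y)
    (hx : t x ≠ x) (hy : t y ≠ y) : t = swap x y := by
  obtain ⟨c, d, -, rfl⟩ := ht
  obtain ⟨-, rfl | rfl⟩ := swap_apply_ne_self_iff.mp hx <;>
    obtain ⟨-, rfl | rfl⟩ := swap_apply_ne_self_iff.mp hy
  · exact absurd rfl hxy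
  · rfl
  · exact swap_comm _ _
  · exact absurd rfl hxy

theorem apply_ne_of_not_commute_swap {x y : α} {t : Perm α} (h : ¬ Commute (swap x y) t)
    (hx : t x = x) : t y ≠ y := by
  obtain ⟨z, hz, htz⟩ := exists_apply_ne_of_not_commute_s14 h
  obtain ⟨-, rfl | rfl⟩ := swap_apply_ne_self_iff.mp hz
  exacts [absurd hx htz, htz]

theorem not_commute_swap_swap_s14 {a b c : α} (hba : b ≠ a) (hca : c ≠ a) (hbc : b ≠ c) :
    ¬ Commute (swap a b) (swap a c) := fun h => by
  have h_apply := congr($(h.eq) a)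
  simp only [Perm.mul_apply, swap_apply_left, swap_apply_of_ne_of_ne hba hbc,
    swap_apply_of_ne_of_ne hca hbc.symm] at h_apply
  exact hbc h_apply.symm

-- Conjugating `(a d)` by `(a b)` would give `(b d) = (a c)`.
theorem not_map_star_eq_triangle {f : Perm α →* Perm β} (hf : Function.Injective f) {a b c d : α}
    (hb : b ≠ a) (hc : c ≠ a) (hd : d ≠ a) (hbd : b ≠ d) {x y z : β} (hzx : z ≠ x) (hzy : z ≠ y) :
    ¬ (f (swap a b) = swap x y ∧ f (swap a c) = swap y z ∧ f (swap a d) = swap z x) := by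
  rintro ⟨hfb, hfc, hfd⟩
  have hf_eq : f (swap b d) = f (swap a c) := by
    rw [← swap_mul_swap_mul_swap hd hbd.symm, swap_comm d a, map_mul, map_mul, hfb, hfc, hfd,
      swap_mul_swap_mul_swap hzx hzy]
  have h_apply := congr($(hf hf_eq) a)
  rw [swap_apply_left, swap_apply_of_ne_of_ne hb.symm hd.symm] at h_apply
  exact hc h_apply.symm

theorem exists_common_moved_point [Nontrivial α] {f : Perm α →* Perm β}
    (hf : Function.Injective f) (hswap : ∀ s : Perm α, s.IsSwap → (f s).IsSwap) (a : α) :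
    ∃ x, ∀ b ≠ a, f (swap a b) x ≠ x := by
  have isSwap_map {b} (hb : b ≠ a) : (f (swap a b)).IsSwap := hswap _ ⟨a, b, hb.symm, rfl⟩
  have not_commute_map {b c} (hb : b ≠ a) (hc : c ≠ a) (hbc : b ≠ c) :
      ¬ Commute (f (swap a b)) (f (swap a c)) := fun h =>
    not_commute_swap_swap_s14 hb hc hbc (hf (by simpa only [map_mul] using h.eq))
  obtain ⟨b, hb⟩ := exists_ne a
  obtain ⟨x, y, hxy, hfb⟩ := isSwap_map hb
  -- If neither `x` nor `y` is common, some star `(a b)`, `(a c)`, `(a d)` maps to a triangle.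
  by_contra! hfix
  obtain ⟨c, hc, hcx⟩ := hfix x
  obtain ⟨d, hd, hdy⟩ := hfix y
  have hbc : b ≠ c := by
    rintro rfl
    exact hxy.symm (by simpa only [hfb, swap_apply_left] using hcx)
  have hbd : b ≠ d := by
    rintro rfl
    exact hxy (by simpa only [hfb, swap_apply_right] using hdy)
  have hcy : f (swap a c) y ≠ y :=
    apply_ne_of_not_commute_swap (hfb ▸ not_commute_map hb hc hbc) hcx
  have hdx : f (swap a d) x ≠ x :=
    apply_ne_of_not_commute_swap (swap_comm x y ▸ hfb ▸ not_commute_map hb hd hbd) hdy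
  have hcd : c ≠ d := fun h => hdx (h ▸ hcx)
  obtain ⟨z, hcz, hdz⟩ := exists_apply_ne_of_not_commute_s14 (not_commute_map hc hd hcd)
  have hzx : z ≠ x := fun h => hcz (h ▸ hcx)
  have hzy : z ≠ y := fun h => hdz (h ▸ hdy)
  have hfc : f (swap a c) = swap y z :=
    eq_swap_of_isSwap_of_apply_ne (isSwap_map hc) hzy.symm hcy hcz
  have hfd : f (swap a d) = swap z x :=
    eq_swap_of_isSwap_of_apply_ne (isSwap_map hd) hzx hdz hdx
  exact not_map_star_eq_triangle hf hb hc hd hbd hzx hzy ⟨hfb, hfc, hfd⟩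

theorem exists_map_swap_eq [Nontrivial α] {f : Perm α →* Perm β} (hf : Function.Injective f)
    (hswap : ∀ s : Perm α, s.IsSwap → (f s).IsSwap) :
    ∃ e : α ↪ β, ∀ a b, f (swap a b) = swap (e a) (e b) := by
  obtain ⟨a⟩ : Nonempty α := inferInstance
  obtain ⟨x, hx⟩ := exists_common_moved_point hf hswap a
  let e (b : α) : β := f (swap a b) x
  have map_swap_self (b : α) : f (swap b b) = 1 := by rw [swap_self, ← Perm.one_def, map_one]
  have he_base : e a = x := by simp only [e, map_swap_self, one_apply]
  have map_star (b : α) : f (swap a b) = swap x (e b) := by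
    obtain rfl | hb := eq_or_ne b a
    · rw [he_base, map_swap_self, swap_self, Perm.one_def]
    · exact eq_swap_of_isSwap_of_apply_ne (hswap _ ⟨a, b, hb.symm, rfl⟩) (hx b hb).symm (hx b hb)
        ((f (swap a b)).injective.ne (hx b hb))
  have he : Function.Injective e := fun b c hbc => by
    have h_swap : swap a b = swap a c := hf (by rw [map_star, map_star, hbc])
    simpa only [swap_apply_left] using congr($h_swap a)
  refine ⟨⟨e, he⟩, fun b c => ?_⟩
  obtain rfl | hca := eq_or_ne c a
  · change f (swap b c) = swap (e b) (e c)
    rw [swap_comm b, map_star, he_base, swap_comm]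
  obtain rfl | hcb := eq_or_ne c b
  · rw [map_swap_self, swap_self, Perm.one_def]
  calc f (swap b c) = swap x (e b) * swap (e c) x * swap x (e b) := by
        rw [← swap_mul_swap_mul_swap hca hcb, swap_comm c a, map_mul, map_mul, map_star, map_star,
          swap_comm (e c) x]
    _ = swap (e b) (e c) := swap_mul_swap_mul_swap (he_base ▸ he.ne hca) (he.ne hcb)

theorem mem_range_conj_of_forall_isSwap [Finite α] {φ : MulAut (Perm α)}
    (hφ : ∀ s : Perm α, s.IsSwap → (φ s).IsSwap) :
    φ ∈ (MulAut.conj : Perm α →* MulAut (Perm α)).range := by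
  obtain _ | _ := subsingleton_or_nontrivial α
  · exact ⟨1, MulEquiv.ext fun _ => Subsingleton.elim _ _⟩
  obtain ⟨e, he⟩ := exists_map_swap_eq (f := φ.toMonoidHom) φ.injective hφ
  let g : Perm α := .ofBijective e (Finite.injective_iff_bijective.mp e.injective)
  have h_eqOn : Set.EqOn (MulAut.conj g).toMonoidHom φ.toMonoidHom {s | s.IsSwap} := by
    rintro _ ⟨a, b, -, rfl⟩
    exact (swap_apply_apply g a b).symm.trans (he a b).symm
  exact ⟨g, MulEquiv.toMonoidHom_injective (MonoidHom.eq_of_eqOn_dense closure_isSwap h_eqOn)⟩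

end SwapPreserving

section OddInvolutions

variable {α : Type*} [DecidableEq α]

theorem isConj_of_isSwap {s t : Perm α} (hs : s.IsSwap) (ht : t.IsSwap) : IsConj s t := by
  obtain ⟨a, b, hab, rfl⟩ := hs
  obtain ⟨c, d, hcd, rfl⟩ := ht
  exact isConj_swap hab hcd

theorem isSwap_of_isConj_s14 {s t : Perm α} (h : IsConj s t) (hs : s.IsSwap) : t.IsSwap := by
  obtain ⟨a, b, hab, rfl⟩ := hs
  obtain ⟨g, rfl⟩ := isConj_iff.mp h
  exact ⟨g a, g b, g.injective.ne hab, (swap_apply_apply g a b).symm⟩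

variable [Fintype α]

theorem sign_mulAut_apply [Nontrivial α] (φ : MulAut (Perm α)) (g : Perm α) :
    sign (φ g) = sign g :=
  DFunLike.congr_fun
    (eq_sign_of_surjective_hom (s := sign.comp φ.toMonoidHom)
      ((sign_surjective α).comp φ.surjective)) g

-- Five disjoint transpositions would need ten points.
theorem cycleType_of_sq_eq_one_of_sign_eq_neg_one (hα : Fintype.card α < 10) {s : Perm α}
    (hs : s ^ 2 = 1) (hsign : sign s = -1) : s.cycleType = {2} ∨ s.cycleType = {2, 2, 2} := by
  obtain ⟨n, hn⟩ : ∃ n, s.cycleType = Multiset.replicate n 2 :=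
    ⟨_, Multiset.eq_replicate.mpr ⟨rfl, pow_prime_eq_one_iff.mp hs⟩⟩
  have hn_odd : Odd n := by
    rw [sign_of_cycleType, hn, Multiset.sum_replicate, Multiset.card_replicate, smul_eq_mul,
      pow_add, pow_mul', neg_one_sq, one_pow, one_mul] at hsign
    exact (neg_one_pow_eq_neg_one_iff_odd (by decide)).mp hsign
  have hn_lt : n < 5 := by
    have h_sum := s.sum_cycleType_le
    rw [hn, Multiset.sum_replicate, smul_eq_mul] at h_sum
    omega
  obtain rfl | rfl : n = 1 ∨ n = 3 := by
    obtain ⟨k, rfl⟩ := hn_odd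
    omega
  · exact Or.inl hn
  · exact Or.inr hn

theorem cycleType_map_of_notMem_range_conj (hα : Fintype.card α < 10) {φ : MulAut (Perm α)}
    (hφ : φ ∉ (MulAut.conj : Perm α →* MulAut (Perm α)).range) {t : Perm α} (ht : t.IsSwap) :
    (φ t).cycleType = {2, 2, 2} := by
  have : Nontrivial α := by
    obtain ⟨a, b, hab, -⟩ := ht
    exact ⟨a, b, hab⟩
  have h_not_isSwap : ¬ (φ t).IsSwap := fun h => hφ <| mem_range_conj_of_forall_isSwap fun s hs =>
    isSwap_of_isConj_s14 (φ.toMonoidHom.map_isConj (isConj_of_isSwap ht hs)) h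
  have h_sq : φ t ^ 2 = 1 := by rw [← map_pow, ← ht.orderOf, pow_orderOf_eq_one, map_one]
  have h_sign : sign (φ t) = -1 := by rw [sign_mulAut_apply, ht.sign_eq]
  exact (cycleType_of_sq_eq_one_of_sign_eq_neg_one hα h_sq h_sign).resolve_left
    (isSwap_iff_cycleType.not.mp h_not_isSwap)

end OddInvolutions

theorem inv_mul_mem_range_conj {α : Type*} [Finite α] (hα : Nat.card α < 10)
    {φ ψ : MulAut (Perm α)} (hφ : φ ∉ (MulAut.conj : Perm α →* MulAut (Perm α)).range)
    (hψ : ψ ∉ (MulAut.conj : Perm α →* MulAut (Perm α)).range) :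
    ψ⁻¹ * φ ∈ (MulAut.conj : Perm α →* MulAut (Perm α)).range := by
  classical
  have := Fintype.ofFinite α
  rw [Nat.card_eq_fintype_card] at hα
  refine mem_range_conj_of_forall_isSwap fun s hs => ?_
  have h_conj : IsConj (ψ s) (φ s) := isConj_iff_cycleType_eq.mpr <|
    (cycleType_map_of_notMem_range_conj hα hψ hs).trans
      (cycleType_map_of_notMem_range_conj hα hφ hs).symm
  have h_conj' : IsConj (ψ⁻¹ (ψ s)) (ψ⁻¹ (φ s)) := ψ⁻¹.toMonoidHom.map_isConj h_conj
  rw [MulAut.inv_apply_self] at h_conj'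
  exact isSwap_of_isConj_s14 h_conj' hs

section OuterAutomorphism

variable {α : Type*} [Finite α]

theorem eq_bot_of_normal_of_two_lt_index (hα : 5 ≤ Nat.card α) {N : Subgroup (Perm α)} [N.Normal]
    (hN : 2 < N.index) : N = ⊥ := by
  classical
  have := Fintype.ofFinite α
  have : Nontrivial α := Finite.one_lt_card_iff_nontrivial.mp (by omega)
  by_contra h
  have h_le : alternatingGroup α ≤ N :=
    alternatingGroup_le_of_normal hα ((Subgroup.nontrivial_iff_ne_bot N).mpr h)
  have h_dvd := Subgroup.index_dvd_of_le h_le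
  rw [alternatingGroup.index_eq_two] at h_dvd
  exact hN.not_ge (Nat.le_of_dvd two_pos h_dvd)

theorem toPermHom_injective_of_isPretransitive (hα : 5 ≤ Nat.card α) {X : Type*}
    [MulAction (Perm α) X] [IsPretransitive (Perm α) X] (hX : 2 < Nat.card X) :
    Function.Injective (toPermHom (Perm α) X) := by
  obtain ⟨⟨x⟩, _⟩ := Nat.card_pos_iff.mp (two_pos.trans hX)
  have h_le : (toPermHom (Perm α) X).ker ≤ stabilizer (Perm α) x := fun g hg =>
    congr($(MonoidHom.mem_ker.mp hg) x)
  have h_index := Nat.le_of_dvd (Nat.pos_of_ne_zero Subgroup.FiniteIndex.index_ne_zero)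
    (Subgroup.index_dvd_of_le h_le)
  rw [index_stabilizer_of_transitive] at h_index
  exact (MonoidHom.ker_eq_bot_iff _).mp
    (eq_bot_of_normal_of_two_lt_index hα (hX.trans_le h_index))

/-- The permutation representation of `G` on `X`, with the points relabelled along `e : X ≃ β`:
it turns actions on cosets or Sylow subgroups into homomorphisms to a given symmetric group. -/
def relabelledPermHom (G : Type*) [Group G] {X β : Type*} [MulAction G X] (e : X ≃ β) :
    G →* Perm β :=
  e.permCongrHom.toMonoidHom.comp (toPermHom G X)

theorem relabelledPermHom_apply_apply {G X β : Type*} [Group G] [MulAction G X] (e : X ≃ β) (g : G)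
    (x : X) : relabelledPermHom G e g (e x) = e (g • x) :=
  congr(e (g • $(e.symm_apply_apply x)))

theorem relabelledPermHom_injective (hα : 5 ≤ Nat.card α) {X β : Type*} [MulAction (Perm α) X]
    [IsPretransitive (Perm α) X] (hX : 2 < Nat.card X) (e : X ≃ β) :
    Function.Injective (relabelledPermHom (Perm α) e) :=
  e.permCongrHom.injective.comp (toPermHom_injective_of_isPretransitive hα hX)

theorem exists_mulAut_mem_iff_apply_eq (hα : 5 ≤ Nat.card α) {H : Subgroup (Perm α)}
    (hH : H.index = Nat.card α) :
    ∃ (φ : MulAut (Perm α)) (x : α), ∀ g, g ∈ H ↔ φ g x = x := by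
  have h_card : Nat.card (Perm α ⧸ H) = Nat.card α := hH
  obtain ⟨e⟩ : Nonempty (Perm α ⧸ H ≃ α) := Finite.card_eq.mp h_card
  have h_inj : Function.Injective (relabelledPermHom (Perm α) e) :=
    relabelledPermHom_injective hα (by omega) e
  refine ⟨.ofBijective _ (Finite.injective_iff_bijective.mp h_inj), e (1 : Perm α), fun g => ?_⟩
  rw [MulEquiv.ofBijective_apply, relabelledPermHom_apply_apply, e.apply_eq_iff_eq,
    ← mem_stabilizer_iff, stabilizer_quotient]

theorem exists_notMem_range_conj (hα : 5 ≤ Nat.card α) {H : Subgroup (Perm α)}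
    [IsPretransitive H α] (hH : H.index = Nat.card α) :
    ∃ φ : MulAut (Perm α), φ ∉ (MulAut.conj : Perm α →* MulAut (Perm α)).range := by
  have : Nontrivial α := Finite.one_lt_card_iff_nontrivial.mp (by omega)
  obtain ⟨φ, x, hφ⟩ := exists_mulAut_mem_iff_apply_eq hα hH
  refine ⟨φ, ?_⟩
  rintro ⟨g, rfl⟩
  obtain ⟨y, hy⟩ := exists_ne (g⁻¹ x)
  obtain ⟨h, h_move⟩ := exists_smul_eq H (g⁻¹ x) y
  have h_fix : h.1 (g⁻¹ x) = g⁻¹ x := by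
    rw [eq_inv_iff_eq]
    exact (hφ h).mp h.2
  exact hy (h_move.symm.trans h_fix)

end OuterAutomorphism

section ExoticSubgroup

theorem card_sylow_perm_fin_self {p : ℕ} [hp : Fact p.Prime] (P : Sylow p (Perm (Fin p))) :
    Nat.card P = p := by
  have h_factorization : p.factorial.factorization p = 1 := by
    simpa using Nat.factorization_factorial_mul_succ (n := 0) hp.out
  rw [P.card_eq_multiplicity, Nat.card_perm, Nat.card_fin, h_factorization, pow_one]

theorem card_sylow_five_perm_fin_five : Nat.card (Sylow 5 (Perm (Fin 5))) = 6 := by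
  have : Fact (Nat.Prime 5) := ⟨Nat.prime_five⟩
  obtain ⟨P⟩ : Nonempty (Sylow 5 (Perm (Fin 5))) := inferInstance
  have h_card : Nat.card P = 5 := card_sylow_perm_fin_self P
  have h_index : P.index = 24 := by
    have h_mul := (P : Subgroup (Perm (Fin 5))).card_mul_index
    rw [h_card, Nat.card_perm, Nat.card_fin, show Nat.factorial 5 = 5 * 24 from rfl] at h_mul
    exact Nat.eq_of_mul_eq_mul_left (by norm_num) h_mul
  have h_ne_one : Nat.card (Sylow 5 (Perm (Fin 5))) ≠ 1 := fun h => by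
    have := (Nat.card_eq_one_iff_unique.mp h).1
    have := P.normal_of_subsingleton
    have h_bot : (P : Subgroup (Perm (Fin 5))) = ⊥ :=
      eq_bot_of_normal_of_two_lt_index (Nat.card_fin 5).ge (by omega)
    rw [h_bot, Subgroup.card_bot] at h_card
    omega
  have h_dvd : Nat.card (Sylow 5 (Perm (Fin 5))) ∣ 24 := h_index ▸ P.card_dvd_index
  have h_mod := card_sylow_modEq_one 5 (Perm (Fin 5))
  have h_le := Nat.le_of_dvd (by norm_num) h_dvd
  unfold Nat.ModEq at h_mod
  interval_cases Nat.card (Sylow 5 (Perm (Fin 5))) <;> omega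

theorem exists_isPretransitive_index_eq_six {α : Type*} (hα : Nat.card α = 6) :
    ∃ H : Subgroup (Perm α), IsPretransitive H α ∧ H.index = 6 := by
  have : Fact (Nat.Prime 5) := ⟨Nat.prime_five⟩
  have : Finite α := Nat.finite_of_card_ne_zero (by omega)
  have h_card := card_sylow_five_perm_fin_five
  obtain ⟨e⟩ : Nonempty (Sylow 5 (Perm (Fin 5)) ≃ α) := Finite.card_eq.mp (h_card.trans hα.symm)
  let f := relabelledPermHom (Perm (Fin 5)) e
  have hf : Function.Injective f :=
    relabelledPermHom_injective (Nat.card_fin 5).ge (by omega) e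
  refine ⟨f.range, ⟨e.surjective.forall₂.mpr fun P Q => ?_⟩, ?_⟩
  · obtain ⟨g, rfl⟩ := exists_smul_eq (Perm (Fin 5)) P Q
    exact ⟨⟨f g, g, rfl⟩, relabelledPermHom_apply_apply e g P⟩
  · have h_mul := f.range.card_mul_index
    rw [← Nat.card_congr (f.ofInjective hf).toEquiv, Nat.card_perm, Nat.card_perm, hα, Nat.card_fin,
      show Nat.factorial 6 = Nat.factorial 5 * 6 from rfl] at h_mul
    exact Nat.eq_of_mul_eq_mul_left (Nat.factorial_pos 5) h_mul

end ExoticSubgroup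

theorem out_S6_has_order_two_general {α : Type*} (hα : Nat.card α = 6) :
    (MulAut.conj : Perm α →* MulAut (Perm α)).range.index = 2 := by
  have : Finite α := Nat.finite_of_card_ne_zero (by omega)
  obtain ⟨H, _, hH⟩ := exists_isPretransitive_index_eq_six hα
  obtain ⟨φ, hφ⟩ := exists_notMem_range_conj (by omega) (hH.trans hα.symm)
  exact Subgroup.index_eq_two_iff_exists_notMem_and'.mpr ⟨φ⁻¹, inv_mem_iff.not.mpr hφ, fun ψ =>
    or_iff_not_imp_right.mpr fun hψ => inv_mul_mem_range_conj (by omega) hψ hφ⟩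

theorem out_S6_has_order_two :
    ((MulAut.conj : Equiv.Perm (Fin 6) →* MulAut (Equiv.Perm (Fin 6))).range).index = 2 :=
  out_S6_has_order_two_general (Nat.card_fin 6)
end

section
/- Let X be a totally symmetric subset of a group G with |X| ≥ 3. If an element c and its inverse c⁻¹ both belong to X, then c = c⁻¹. -/
namespace IsTotallySymmetric

variable {G : Type*} [Group G] {X : Set G} {x y z : G}

lemma exists_commute_semiconjBy (hX : IsTotallySymmetric X) (hx : x ∈ X) (hy : y ∈ X) (hz : z ∈ X)
    (hxy : x ≠ y) (hxz : x ≠ z) : ∃ g : G, Commute g x ∧ SemiconjBy g y z := by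
  classical
  obtain ⟨g, hg⟩ := hX (Equiv.swap ⟨y, hy⟩ ⟨z, hz⟩)
  have hgx : g * x * g⁻¹ = x := by
    simpa [Equiv.swap_apply_of_ne_of_ne, hxy, hxz] using hg ⟨x, hx⟩
  have hgy : g * y * g⁻¹ = z := by
    simpa using hg ⟨y, hy⟩
  exact ⟨g, mul_inv_eq_iff_eq_mul.mp hgx, mul_inv_eq_iff_eq_mul.mp hgy⟩

/- If `x ≠ y`, total symmetry lets some `g` fix `x` while moving `y` to a third element of `X`,
but anything that fixes `x` under conjugation also fixes `y`. -/
lemma eq_of_forall_commute (hX : IsTotallySymmetric X) (hcard : 3 ≤ X.encard)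
    (hx : x ∈ X) (hy : y ∈ X) (hcomm : ∀ g : G, Commute g x → Commute g y) : x = y := by
  by_contra hxy
  have hpair : ({x, y} : Set G).encard < X.encard := by
    rw [Set.encard_pair hxy]
    exact lt_of_lt_of_le (by norm_num) hcard
  obtain ⟨z, hz, hzxy⟩ : ∃ z ∈ X, z ∉ ({x, y} : Set G) :=
    Set.not_subset.mp fun hsub ↦ hpair.not_ge (Set.encard_le_encard hsub)
  obtain ⟨hzx, hzy⟩ : z ≠ x ∧ z ≠ y := by simpa using hzxy
  obtain ⟨g, hgx, hgyz⟩ := hX.exists_commute_semiconjBy hx hy hz hxy hzx.symm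
  have hgy : g * y = y * g := hcomm g hgx
  exact hzy (mul_right_cancel (hgyz.eq.symm.trans hgy))

end IsTotallySymmetric

theorem inverse_pair_in_totally_symmetric {G : Type*} [Group G]
    (X : Set G) (hX : IsTotallySymmetric X) (hcard : 3 ≤ X.encard)
    (c : G) (hc : c ∈ X) (hc' : c⁻¹ ∈ X) : c = c⁻¹ :=
  hX.eq_of_forall_commute hcard hc hc' fun _ hgc ↦ hgc.inv_right
end
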